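/- arXiv:1803.00965 — 12 statements merged into one kernel-verified Lean document; each statement's English description precedes it below -/
import Mathlib

section
/- For every subgroup D of (ℤ/2ⁿℤ, +), every element v ∈ ℤ/2ⁿℤ, and every j ∈ {1,…,δ}, the j-th box of the coset v + D = {v + d : d ∈ D} has the same kind as the j-th box of D: it is white if and only if the j-th box of D is white, black if and only if it is black, and ruled if and only if it is ruled. -/
/-!
Put `p = m * j`. Adding a multiple `2^p * t` to `x` leaves the digits below position `p` untouched,
so it adds `t` to the `j`-th brick of `x` (`projZ_add`). A subgroup `D` of `ℤ/2ⁿℤ` either contains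
`2^p` or consists of multiples of `2^p` (`pow_mem_or_dvd`). In the first case the `j`-th box of every
coset of `D` is black. In the second case the `j`-th box of `v + D` is the translate by `projZ v` of
the `j`-th box of `D`, and translations preserve being a singleton and being everything.
-/

/-- The `j`-th brick projection of `x ∈ ℤ/2^{mδ}ℤ`: the `j`-th block of `m` consecutive
binary digits of `x`, i.e. `⌊x̄ / 2^{m·j}⌋ mod 2^m` (0-indexed `j`). -/
def projZ (m δ : ℕ) (j : Fin δ) (x : ZMod (2 ^ (m * δ))) : ZMod (2 ^ m) :=
  ((x.val / 2 ^ (m * (j : ℕ))) : ℕ)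

/-- A box is white if it is a singleton. -/
def IsWhite {α : Type*} (S : Set α) : Prop := ∃ a, S = {a}

/-- A box is black if it is everything. -/
def IsBlack {α : Type*} (S : Set α) : Prop := S = Set.univ

/-- A box is ruled if it is neither white nor black. -/
def IsRuled {α : Type*} (S : Set α) : Prop := ¬ IsWhite S ∧ ¬ IsBlack S

/-- Adding `2^(m*j) * t` produces no carry into the `j`-th brick; the reduction modulo `2^(m*δ)` is
harmless because `m*j + m ≤ m*δ`. -/
lemma projZ_add (m δ : ℕ) (j : Fin δ) (x : ZMod (2 ^ (m * δ))) (t : ℕ) :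
    projZ m δ j (x + ((2 ^ (m * (j : ℕ)) * t : ℕ) : ZMod (2 ^ (m * δ)))) = projZ m δ j x + t := by
  unfold projZ
  obtain ⟨e, he⟩ : ∃ e, m * δ = m * (j : ℕ) + m + e := by
    have h : m * ((j : ℕ) + 1) ≤ m * δ := Nat.mul_le_mul_left m j.2
    exact ⟨m * δ - (m * j + m), by rw [Nat.mul_add] at h; omega⟩
  have hx : x + ((2 ^ (m * (j : ℕ)) * t : ℕ) : ZMod (2 ^ (m * δ)))
      = ((x.val + 2 ^ (m * (j : ℕ)) * t : ℕ) : ZMod (2 ^ (m * δ))) := by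
    rw [Nat.cast_add, ZMod.natCast_zmod_val]
  rw [hx, ZMod.val_natCast, ← Nat.cast_add, ZMod.natCast_eq_natCast_iff]
  have h1 : 2 ^ (m * δ) = 2 ^ (m * (j : ℕ)) * (2 ^ m * 2 ^ e) := by
    rw [he, pow_add, pow_add, mul_assoc]
  generalize x.val = a
  rw [h1, Nat.mod_mul_right_div_self, Nat.add_mul_div_left _ _ (by positivity)]
  exact Nat.mod_mod_of_dvd _ (Dvd.intro _ rfl)

/-- The subgroups of `ℤ/2ⁿℤ` are totally ordered by inclusion, here in the form of a comparison
of `D` with the subgroup generated by `2^p`. -/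
lemma pow_mem_or_dvd (n p : ℕ) (D : AddSubgroup (ZMod (2 ^ n))) :
    ((2 ^ p : ℕ) : ZMod (2 ^ n)) ∈ D ∨ ∀ d ∈ D, 2 ^ p ∣ d.val := by
  by_contra! h
  obtain ⟨hp, d, hd, hnd⟩ := h
  obtain ⟨a, -, ha⟩ := (Nat.dvd_prime_pow Nat.prime_two).1 (Nat.gcd_dvd_right d.val (2 ^ n))
  have hap : a ≤ p := by
    by_contra! hlt
    exact hnd ((pow_dvd_pow 2 hlt.le).trans (ha ▸ Nat.gcd_dvd_left _ _))
  -- Bézout: `2^a = gcd(d, 2^n)` is a multiple of `d` modulo `2^n`.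
  have hmem : ((2 ^ a : ℕ) : ZMod (2 ^ n)) ∈ D := by
    have hb := congrArg (Int.cast : ℤ → ZMod (2 ^ n)) (Nat.gcd_eq_gcd_ab d.val (2 ^ n))
    rw [ha, Int.cast_natCast, Int.cast_add, Int.cast_mul, Int.cast_mul, Int.cast_natCast,
      Int.cast_natCast, ZMod.natCast_self, zero_mul, add_zero, ZMod.natCast_zmod_val] at hb
    rw [hb, mul_comm, ← zsmul_eq_mul]
    exact D.zsmul_mem hd _
  apply hp
  obtain ⟨b, rfl⟩ := Nat.exists_eq_add_of_le hap
  rw [pow_add, mul_comm, Nat.cast_mul, ← nsmul_eq_mul]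
  exact D.nsmul_mem hmem _

lemma projZ_coset_eq_univ (m δ : ℕ) (D : AddSubgroup (ZMod (2 ^ (m * δ))))
    (v : ZMod (2 ^ (m * δ))) (j : Fin δ)
    (h : ((2 ^ (m * (j : ℕ)) : ℕ) : ZMod (2 ^ (m * δ))) ∈ D) :
    projZ m δ j '' ((fun d => v + d) '' (D : Set (ZMod (2 ^ (m * δ))))) = Set.univ := by
  refine Set.eq_univ_of_forall fun y => ?_
  refine ⟨_, ⟨((2 ^ (m * (j : ℕ)) * (y - projZ m δ j v).val : ℕ) : ZMod (2 ^ (m * δ))),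
    ?_, rfl⟩, ?_⟩
  · rw [Nat.cast_mul, mul_comm (Nat.cast _), ← nsmul_eq_mul]
    exact D.nsmul_mem h _
  · simp only [projZ_add, ZMod.natCast_zmod_val, add_sub_cancel]

lemma projZ_coset_eq_translate (m δ : ℕ) (D : AddSubgroup (ZMod (2 ^ (m * δ))))
    (v : ZMod (2 ^ (m * δ))) (j : Fin δ) (h : ∀ d ∈ D, 2 ^ (m * (j : ℕ)) ∣ d.val) :
    projZ m δ j '' ((fun d => v + d) '' (D : Set (ZMod (2 ^ (m * δ))))) =
      Equiv.addLeft (projZ m δ j v) '' (projZ m δ j '' (D : Set (ZMod (2 ^ (m * δ))))) := by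
  rw [Set.image_image, Set.image_image]
  refine Set.image_congr fun d hd => ?_
  obtain ⟨t, ht⟩ := h d hd
  have hdt : d = ((2 ^ (m * (j : ℕ)) * t : ℕ) : ZMod (2 ^ (m * δ))) := by
    rw [← ht, ZMod.natCast_zmod_val]
  have h0 := projZ_add m δ j 0 t
  have hz : projZ m δ j 0 = 0 := by simp [projZ]
  rw [zero_add, hz, zero_add] at h0
  rw [hdt, projZ_add, Equiv.coe_addLeft, h0]

lemma isWhite_image_equiv {α β : Type*} (e : α ≃ β) (S : Set α) :
    IsWhite (e '' S) ↔ IsWhite S := by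
  constructor
  · rintro ⟨b, hb⟩
    exact ⟨e.symm b, by rw [← e.symm_image_image S, hb, Set.image_singleton]⟩
  · rintro ⟨a, rfl⟩
    exact ⟨e a, Set.image_singleton⟩

lemma isBlack_image_equiv {α β : Type*} (e : α ≃ β) (S : Set α) :
    IsBlack (e '' S) ↔ IsBlack S := by
  unfold IsBlack
  rw [← Set.image_univ_of_surjective e.surjective, e.injective.image_injective.eq_iff]

/-- For every subgroup `D` of `(ℤ/2ⁿℤ, +)` (with `n = m·δ`), every
`v ∈ ℤ/2ⁿℤ` and every brick index `j`, the `j`-th box of the coset `v + D` has the same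
kind (white/black/ruled) as the `j`-th box of `D`. -/
theorem stmt_2 (m δ : ℕ) (hm : 1 ≤ m) (hδ : 1 ≤ δ)
    (D : AddSubgroup (ZMod (2 ^ (m * δ)))) (v : ZMod (2 ^ (m * δ))) (j : Fin δ) :
    (IsWhite (projZ m δ j '' ((fun d => v + d) '' (D : Set (ZMod (2 ^ (m * δ)))))) ↔
      IsWhite (projZ m δ j '' (D : Set (ZMod (2 ^ (m * δ)))))) ∧
    (IsBlack (projZ m δ j '' ((fun d => v + d) '' (D : Set (ZMod (2 ^ (m * δ)))))) ↔
      IsBlack (projZ m δ j '' (D : Set (ZMod (2 ^ (m * δ)))))) ∧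
    (IsRuled (projZ m δ j '' ((fun d => v + d) '' (D : Set (ZMod (2 ^ (m * δ)))))) ↔
      IsRuled (projZ m δ j '' (D : Set (ZMod (2 ^ (m * δ)))))) := by
  have key : (IsWhite (projZ m δ j '' ((fun d => v + d) '' (D : Set (ZMod (2 ^ (m * δ)))))) ↔
        IsWhite (projZ m δ j '' (D : Set (ZMod (2 ^ (m * δ)))))) ∧
      (IsBlack (projZ m δ j '' ((fun d => v + d) '' (D : Set (ZMod (2 ^ (m * δ)))))) ↔
        IsBlack (projZ m δ j '' (D : Set (ZMod (2 ^ (m * δ)))))) := by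
    rcases pow_mem_or_dvd (m * δ) (m * j) D with h | h
    · have h0 := projZ_coset_eq_univ m δ D 0 j h
      simp only [zero_add, Set.image_id'] at h0
      rw [projZ_coset_eq_univ m δ D v j h, h0]
      exact ⟨Iff.rfl, Iff.rfl⟩
    · rw [projZ_coset_eq_translate m δ D v j h]
      exact ⟨isWhite_image_equiv _ _, isBlack_image_equiv _ _⟩
  exact ⟨key.1, key.2, and_congr (not_congr key.1) (not_congr key.2)⟩
end

section
/- Let 0 ≤ q ≤ n and let D = ⟨2^q⟩ be the subgroup of (ℤ/2ⁿℤ, +) generated by 2^q; write q = n_w·m + r with 0 ≤ r < m. If r = 0, then π_j(D) = {0} (white) for 1 ≤ j ≤ n_w and π_j(D) = ℤ/2^mℤ (black) for n_w < j ≤ δ. If r > 0, then π_j(D) = {0} (white) for 1 ≤ j ≤ n_w, π_{n_w+1}(D) equals the set of multiples of 2^r in ℤ/2^mℤ, which has cardinality 2^{m−r} strictly between 1 and 2^m (ruled), and π_j(D) = ℤ/2^mℤ (black) for n_w + 2 ≤ j ≤ δ. -/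
theorem mem_closure_two_pow_iff {N q : ℕ} (hq : q ≤ N) (x : ZMod (2 ^ N)) :
    x ∈ AddSubgroup.closure {(2 : ZMod (2 ^ N)) ^ q} ↔ 2 ^ q ∣ x.val := by
  have : NeZero (2 ^ N) := ⟨by positivity⟩
  rw [AddSubgroup.mem_closure_singleton]
  constructor
  · rintro ⟨k, rfl⟩
    -- Divisibility of the representative is vanishing under reduction `ℤ/2^N → ℤ/2^q`.
    have h2 : (2 : ZMod (2 ^ q)) ^ q = 0 := by
      have := ZMod.natCast_self (2 ^ q)
      push_cast at this
      exact this
    rw [← ZMod.natCast_eq_zero_iff, ZMod.natCast_val,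
      ← ZMod.castHom_apply (h := pow_dvd_pow 2 hq), map_zsmul, map_pow, map_ofNat, h2, smul_zero]
  · rintro ⟨t, ht⟩
    refine ⟨t, ?_⟩
    rw [← ZMod.natCast_zmod_val x, ht]
    push_cast
    rw [zsmul_eq_mul, mul_comm]
    simp

theorem range_two_pow_mul_eq {m r : ℕ} :
    Set.range (fun t : ZMod (2 ^ m) => (2 : ZMod (2 ^ m)) ^ r * t) =
      AddSubgroup.closure {(2 : ZMod (2 ^ m)) ^ r} := by
  ext y
  simp only [Set.mem_range, SetLike.mem_coe, AddSubgroup.mem_closure_singleton, zsmul_eq_mul]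
  constructor
  · rintro ⟨t, rfl⟩
    obtain ⟨k, rfl⟩ := ZMod.intCast_surjective t
    exact ⟨k, mul_comm _ _⟩
  · rintro ⟨k, rfl⟩
    exact ⟨k, mul_comm _ _⟩

theorem ncard_range_two_pow_mul {m r : ℕ} (hr : r ≤ m) :
    (Set.range (fun t : ZMod (2 ^ m) => (2 : ZMod (2 ^ m)) ^ r * t)).ncard = 2 ^ (m - r) := by
  rw [range_two_pow_mul_eq, ← AddSubgroup.zmultiples_eq_closure, ← Nat.card_coe_set_eq]
  have h : addOrderOf ((2 ^ r : ℕ) : ZMod (2 ^ m)) = 2 ^ m / (2 ^ m).gcd (2 ^ r) :=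
    ZMod.addOrderOf_coe _ (by positivity)
  rw [Nat.gcd_eq_right (pow_dvd_pow 2 hr), Nat.pow_div hr (by norm_num)] at h
  push_cast at h
  rw [← h]
  exact Nat.card_zmultiples _

theorem image_projZ_eq_zero {m δ q : ℕ} (hq : q ≤ m * δ) (j : Fin δ)
    (hj : m * ((j : ℕ) + 1) ≤ q) :
    projZ m δ j '' (AddSubgroup.closure {(2 : ZMod (2 ^ (m * δ))) ^ q} :
      Set (ZMod (2 ^ (m * δ)))) = {0} := by
  refine Set.eq_singleton_iff_unique_mem.2 ⟨⟨0, zero_mem _, by simp [projZ]⟩, ?_⟩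
  rintro _ ⟨x, hx, rfl⟩
  rw [SetLike.mem_coe, mem_closure_two_pow_iff hq] at hx
  rw [projZ, ZMod.natCast_eq_zero_iff]
  refine Nat.dvd_div_of_mul_dvd ((?_ : _ ∣ 2 ^ q).trans hx)
  rw [← pow_add]
  exact pow_dvd_pow 2 (by linarith)

/-- A digit block `y` is attained at box `j` as soon as `2^{mj} y` lies in `⟨2^q⟩`. -/
theorem mem_image_projZ {m δ q : ℕ} (hq : q ≤ m * δ) (j : Fin δ) (y : ZMod (2 ^ m))
    (hy : 2 ^ q ∣ 2 ^ (m * (j : ℕ)) * y.val) :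
    y ∈ projZ m δ j '' (AddSubgroup.closure {(2 : ZMod (2 ^ (m * δ))) ^ q} :
      Set (ZMod (2 ^ (m * δ)))) := by
  have : NeZero (2 ^ m) := ⟨by positivity⟩
  -- `2^{mj} y < 2^{m(j+1)} ≤ 2^{mδ}`, so it is its own canonical representative.
  have hlt : 2 ^ (m * (j : ℕ)) * y.val < 2 ^ (m * δ) := calc
    _ < 2 ^ (m * (j : ℕ)) * 2 ^ m := Nat.mul_lt_mul_of_pos_left (ZMod.val_lt y) (by positivity)
    _ = 2 ^ (m * ((j : ℕ) + 1)) := by ring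
    _ ≤ 2 ^ (m * δ) := Nat.pow_le_pow_right (by norm_num) (Nat.mul_le_mul_left m j.isLt)
  have hval := ZMod.val_natCast_of_lt hlt
  refine ⟨((2 ^ (m * (j : ℕ)) * y.val : ℕ) : ZMod (2 ^ (m * δ))), ?_, ?_⟩
  · rwa [SetLike.mem_coe, mem_closure_two_pow_iff hq, hval]
  · rw [projZ, hval, Nat.mul_div_cancel_left _ (by positivity), ZMod.natCast_zmod_val]

theorem image_projZ_eq_univ {m δ q : ℕ} (hq : q ≤ m * δ) (j : Fin δ) (hj : q ≤ m * (j : ℕ)) :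
    projZ m δ j '' (AddSubgroup.closure {(2 : ZMod (2 ^ (m * δ))) ^ q} :
      Set (ZMod (2 ^ (m * δ)))) = Set.univ :=
  Set.eq_univ_of_forall fun y =>
    mem_image_projZ hq j y (Dvd.dvd.mul_right (pow_dvd_pow 2 hj) _)

theorem image_projZ_eq_range {m δ q r : ℕ} (hq : q ≤ m * δ) (j : Fin δ)
    (hj : q = m * (j : ℕ) + r) (hr : r ≤ m) :
    projZ m δ j '' (AddSubgroup.closure {(2 : ZMod (2 ^ (m * δ))) ^ q} :
      Set (ZMod (2 ^ (m * δ)))) =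
      Set.range (fun t : ZMod (2 ^ m) => (2 : ZMod (2 ^ m)) ^ r * t) := by
  apply Set.Subset.antisymm
  · rintro _ ⟨x, hx, rfl⟩
    rw [SetLike.mem_coe, mem_closure_two_pow_iff hq] at hx
    obtain ⟨t, ht⟩ := hx
    refine ⟨t, ?_⟩
    rw [projZ, ht, hj, pow_add, mul_assoc, Nat.mul_div_cancel_left _ (by positivity)]
    push_cast
    rfl
  · intro y hy
    rw [range_two_pow_mul_eq, SetLike.mem_coe, mem_closure_two_pow_iff hr] at hy
    apply mem_image_projZ hq
    rw [hj, pow_add]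
    exact mul_dvd_mul_left _ hy

/-- Let `D = ⟨2^q⟩ ≤ (ℤ/2ⁿℤ, +)` with `n = m·δ`, `q = n_w·m + r`,
`0 ≤ r < m`.  If `r = 0` then the first `n_w` boxes of `D` are `{0}` (white) and the
remaining ones are everything (black).  If `r > 0` then the first `n_w` boxes are `{0}`
(white), the box number `n_w` (0-indexed) is the set of multiples of `2^r` in `ℤ/2^mℤ`,
of cardinality `2^{m-r}` strictly between `1` and `2^m` (ruled), and the boxes from
`n_w + 1` on are everything (black). -/
theorem stmt_3 (m δ q : ℕ) (hm : 1 ≤ m) (hδ : 1 ≤ δ) (hq : q ≤ m * δ)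
    (nw r : ℕ) (hdecomp : q = nw * m + r) (hr : r < m)
    (D : AddSubgroup (ZMod (2 ^ (m * δ))))
    (hD : D = AddSubgroup.closure {((2 : ZMod (2 ^ (m * δ))) ^ q)}) :
    (r = 0 →
      (∀ j : Fin δ, (j : ℕ) < nw →
        projZ m δ j '' (D : Set (ZMod (2 ^ (m * δ)))) = {0}) ∧
      (∀ j : Fin δ, nw ≤ (j : ℕ) →
        projZ m δ j '' (D : Set (ZMod (2 ^ (m * δ)))) = Set.univ)) ∧
    (0 < r →
      (∀ j : Fin δ, (j : ℕ) < nw →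
        projZ m δ j '' (D : Set (ZMod (2 ^ (m * δ)))) = {0}) ∧
      (∀ j : Fin δ, (j : ℕ) = nw →
        projZ m δ j '' (D : Set (ZMod (2 ^ (m * δ)))) =
          Set.range (fun t : ZMod (2 ^ m) => (2 : ZMod (2 ^ m)) ^ r * t) ∧
        (Set.range (fun t : ZMod (2 ^ m) => (2 : ZMod (2 ^ m)) ^ r * t)).ncard = 2 ^ (m - r) ∧
        1 < 2 ^ (m - r) ∧ 2 ^ (m - r) < 2 ^ m) ∧
      (∀ j : Fin δ, nw + 1 ≤ (j : ℕ) →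
        projZ m δ j '' (D : Set (ZMod (2 ^ (m * δ)))) = Set.univ)) := by
  subst hD
  have white : ∀ j : Fin δ, (j : ℕ) < nw → m * ((j : ℕ) + 1) ≤ q := fun j hj => by
    have := Nat.mul_le_mul_left m (Nat.succ_le_of_lt hj)
    rw [Nat.succ_eq_add_one] at this
    linarith [mul_comm m nw]
  refine ⟨fun h0 => ⟨fun j hj => image_projZ_eq_zero hq j (white j hj), fun j hj =>
    image_projZ_eq_univ hq j ?_⟩, fun hpos => ⟨fun j hj => image_projZ_eq_zero hq j (white j hj),
    fun j hj => ⟨image_projZ_eq_range hq j ?_ hr.le, ncard_range_two_pow_mul hr.le, ?_, ?_⟩,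
    fun j hj => image_projZ_eq_univ hq j ?_⟩⟩
  · rw [hdecomp, h0, add_zero, mul_comm]
    exact Nat.mul_le_mul_left m hj
  · rw [hdecomp, hj, mul_comm]
  · exact Nat.one_lt_two_pow (by omega)
  · exact Nat.pow_lt_pow_right (by norm_num) (by omega)
  · have := Nat.mul_le_mul_left m hj
    linarith [mul_comm m nw]
end

section
/- Let Λ ∈ GL_n(𝔽₂), let 1 ≤ n_w ≤ δ−1, and let D = {v_w} × 𝔽₂^{m(δ−n_w)} ⊆ V be in standard form of type (n_w, 0, δ−n_w) for some v_w ∈ 𝔽₂^{m·n_w}. If the type of DΛ is also (n_w, 0, δ−n_w) (its first n_w boxes white and its remaining δ−n_w boxes black), then the block submatrix Λ_{(n_w+1,1):(δ,n_w)} is the zero matrix. -/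
/-!
If the coordinate `c` lies in one of the first `nw` bricks, whiteness of the corresponding box
of `DΛ` says that `v ↦ (vΛ)_c` is constant on `D`. When `r` lies in a later brick, `D` is stable
under adding the basis vector `e_r`, so comparing `v₀` and `v₀ + e_r` for a point `v₀ ∈ D` gives
`Λ r c = (e_r Λ)_c = 0`.
-/

open Matrix

/-- The index in `Fin (m * δ)` of the `i`-th coordinate of the `j`-th brick. -/
def brickIdx (m δ : ℕ) (j : Fin δ) (i : Fin m) : Fin (m * δ) :=
  ⟨m * j.val + i.val, by
    have h1 : m * j.val + i.val < m * (j.val + 1) := by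
      rw [Nat.mul_succ]
      exact Nat.add_lt_add_left i.isLt _
    exact lt_of_lt_of_le h1 (Nat.mul_le_mul le_rfl j.isLt)⟩

/-- The projection of a vector on its `j`-th brick. -/
def brickProj (m δ : ℕ) (v : Fin (m * δ) → ZMod 2) (j : Fin δ) : Fin m → ZMod 2 :=
  fun i => v (brickIdx m δ j i)

/-- The `j`-th box of a subset `D`: the projection of `D` on the `j`-th brick. -/
def box (m δ : ℕ) (D : Set (Fin (m * δ) → ZMod 2)) (j : Fin δ) : Set (Fin m → ZMod 2) :=
  (fun v => brickProj m δ v j) '' D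

/-- The set `{v_w} × R × 𝔽₂^{m·n_b}` in standard form: the first `nw` bricks are fixed
(equal to `w`), the brick number `nw` (0-indexed) lies in `R` when `nr = 1`, and the
remaining bricks are free. -/
def StdSet (m δ nw nr : ℕ) (w : Fin δ → Fin m → ZMod 2) (R : Set (Fin m → ZMod 2)) :
    Set (Fin (m * δ) → ZMod 2) :=
  { v | (∀ j : Fin δ, (j : ℕ) < nw → brickProj m δ v j = w j) ∧
        (nr = 1 → ∀ j : Fin δ, (j : ℕ) = nw → brickProj m δ v j ∈ R) }

/-- `D` is in standard form of type `(nw, nr, nb)`. -/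
def StdForm (m δ : ℕ) (D : Set (Fin (m * δ) → ZMod 2)) (nw nr nb : ℕ) : Prop :=
  nw + nr + nb = δ ∧ nr ≤ 1 ∧
  ∃ (w : Fin δ → Fin m → ZMod 2) (R : Set (Fin m → ZMod 2)),
    (nr = 1 → 2 ≤ R.ncard ∧ R.ncard ≤ 2 ^ m - 1) ∧ D = StdSet m δ nw nr w R

/-- `D` has type `(nw, nr, nb)`: its first `nw` boxes are white, the next `nr` boxes are
ruled, and its last `nb` boxes are black. -/
def HasType (m δ : ℕ) (D : Set (Fin (m * δ) → ZMod 2)) (nw nr nb : ℕ) : Prop :=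
  nw + nr + nb = δ ∧ nr ≤ 1 ∧
  ∀ j : Fin δ,
    ((j : ℕ) < nw → IsWhite (box m δ D j)) ∧
    (nw ≤ (j : ℕ) → (j : ℕ) < nw + nr → IsRuled (box m δ D j)) ∧
    (nw + nr ≤ (j : ℕ) → IsBlack (box m δ D j))

/-- `D` and `E` have the same type: corresponding boxes have the same kind. -/
def SameType (m δ : ℕ) (D E : Set (Fin (m * δ) → ZMod 2)) : Prop :=
  ∀ j : Fin δ,
    (IsWhite (box m δ D j) ↔ IsWhite (box m δ E j)) ∧
    (IsBlack (box m δ D j) ↔ IsBlack (box m δ E j))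

lemma m_le_mul (m d : ℕ) (h : 1 ≤ d) : m ≤ m * d := by
  calc m = m * 1 := (Nat.mul_one m).symm
  _ ≤ m * d := Nat.mul_le_mul le_rfl h

lemma shift_lt (m δ a : ℕ) (ha : a ≤ δ) (k : ℕ) (hk : k < m * (δ - a)) :
    m * a + k < m * δ := by
  have h := Nat.add_lt_add_left hk (m * a)
  rwa [← Nat.mul_add, Nat.add_sub_cancel' ha] at h

/-- The index in `Fin (m * δ)` obtained by skipping the first `a` bricks. -/
def shiftIdx (m δ a : ℕ) (ha : a ≤ δ) (k : Fin (m * (δ - a))) : Fin (m * δ) :=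
  ⟨m * a + k.val, shift_lt m δ a ha k.val k.isLt⟩

/-- The submatrix `Λ_{(a+1,b+1):(δ,δ)}` (blocks with row brick ≥ a and column brick ≥ b). -/
def subBlock (m δ : ℕ) (Λ : Matrix (Fin (m * δ)) (Fin (m * δ)) (ZMod 2))
    (a b : ℕ) (ha : a ≤ δ) (hb : b ≤ δ) :
    Matrix (Fin (m * (δ - a))) (Fin (m * (δ - b))) (ZMod 2) :=
  Matrix.of fun r c => Λ (shiftIdx m δ a ha r) (shiftIdx m δ b hb c)

/-- The column of blocks `Λ_{(a+1,j+1):(δ,j+1)}` (row bricks ≥ a, column brick j). -/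
def subColBlock (m δ : ℕ) (Λ : Matrix (Fin (m * δ)) (Fin (m * δ)) (ZMod 2))
    (a : ℕ) (ha : a ≤ δ) (j : Fin δ) :
    Matrix (Fin (m * (δ - a))) (Fin m) (ZMod 2) :=
  Matrix.of fun r c => Λ (shiftIdx m δ a ha r) (brickIdx m δ j c)

/-- The row of blocks `Λ_{(j+1,1):(j+1,c2)}` (row brick j, column bricks < c2). -/
def rowBlock (m δ : ℕ) (Λ : Matrix (Fin (m * δ)) (Fin (m * δ)) (ZMod 2))
    (j : Fin δ) (c2 : ℕ) (hc : c2 ≤ δ) :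
    Matrix (Fin m) (Fin (m * c2)) (ZMod 2) :=
  Matrix.of fun i c => Λ (brickIdx m δ j i) (Fin.castLE (Nat.mul_le_mul le_rfl hc) c)

/-- The block `Λ_{j+1, j'+1}`. -/
def block (m δ : ℕ) (Λ : Matrix (Fin (m * δ)) (Fin (m * δ)) (ZMod 2)) (j j' : Fin δ) :
    Matrix (Fin m) (Fin m) (ZMod 2) :=
  Matrix.of fun i i' => Λ (brickIdx m δ j i) (brickIdx m δ j' i')

/-- The set `R × 𝔽₂^{m (d-1)}` of vectors of `d` bricks whose first brick lies in `R`. -/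
def rulDomain (m d : ℕ) (hd : 1 ≤ d) (R : Set (Fin m → ZMod 2)) :
    Set (Fin (m * d) → ZMod 2) :=
  { u | (fun i : Fin m => u (Fin.castLE (m_le_mul m d hd) i)) ∈ R }

/-- **Lemma: necessity, non-ruled case.** If `D = {v_w} × 𝔽₂^{m(δ-n_w)}` is in
standard form of type `(n_w, 0, δ-n_w)` and `DΛ` also has type `(n_w, 0, δ-n_w)`, then the
block submatrix `Λ_{(n_w+1,1):(δ,n_w)}` is zero. -/
theorem stmt_4 (m δ : ℕ) (hm : 2 ≤ m) (hδ : 2 ≤ δ)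
    (Λ : Matrix (Fin (m * δ)) (Fin (m * δ)) (ZMod 2)) (hΛ : IsUnit Λ)
    (nw : ℕ) (hnw1 : 1 ≤ nw) (hnw2 : nw ≤ δ - 1)
    (w : Fin δ → Fin m → ZMod 2)
    (hType : HasType m δ ((fun v => Matrix.vecMul v Λ) '' StdSet m δ nw 0 w ∅)
      nw 0 (δ - nw)) :
    ∀ r c : Fin (m * δ), m * nw ≤ (r : ℕ) → (c : ℕ) < m * nw → Λ r c = 0 := by
  intro r c hr hc
  have hm0 : 0 < m := by omega
  have hjδ : (c : ℕ) / m < δ := Nat.div_lt_of_lt_mul c.isLt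
  have hjn : (c : ℕ) / m < nw := Nat.div_lt_of_lt_mul hc
  have hcidx : brickIdx m δ ⟨c / m, hjδ⟩ ⟨c % m, Nat.mod_lt _ hm0⟩ = c :=
    Fin.ext (Nat.div_add_mod (c : ℕ) m)
  obtain ⟨a, ha⟩ := (hType.2.2 ⟨c / m, hjδ⟩).1 hjn
  have hcoord : ∀ v ∈ StdSet m δ nw 0 w ∅,
      (v ᵥ* Λ) c = a ⟨c % m, Nat.mod_lt _ hm0⟩ := by
    intro v hv
    have hmem : brickProj m δ (v ᵥ* Λ) ⟨c / m, hjδ⟩ ∈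
        box m δ ((fun v => v ᵥ* Λ) '' StdSet m δ nw 0 w ∅) ⟨c / m, hjδ⟩ :=
      ⟨_, ⟨v, hv, rfl⟩, rfl⟩
    rw [ha, Set.mem_singleton_iff] at hmem
    have h := congrFun hmem ⟨c % m, Nat.mod_lt _ hm0⟩
    rwa [brickProj, hcidx] at h
  let v₀ : Fin (m * δ) → ZMod 2 := fun k =>
    w ⟨k / m, Nat.div_lt_of_lt_mul k.isLt⟩ ⟨k % m, Nat.mod_lt _ hm0⟩
  have hv₀ : v₀ ∈ StdSet m δ nw 0 w ∅ := by
    refine ⟨fun j _ => funext fun i => ?_, fun h => absurd h zero_ne_one⟩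
    change w _ _ = w j i
    exact congrArg₂ w
      (Fin.ext (by simp [brickIdx, Nat.mul_add_div hm0, Nat.div_eq_of_lt i.isLt]))
      (Fin.ext (by simp [brickIdx, Nat.mod_eq_of_lt i.isLt]))
  have hv₁ : v₀ + Pi.single r 1 ∈ StdSet m δ nw 0 w ∅ := by
    refine ⟨fun j hj => funext fun i => ?_, fun h => absurd h zero_ne_one⟩
    have hne : brickIdx m δ j i ≠ r := by
      intro h
      have hval : m * (j : ℕ) + i = r := congrArg Fin.val h
      have hle : m * ((j : ℕ) + 1) ≤ m * nw := Nat.mul_le_mul le_rfl hj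
      have hi := i.isLt
      rw [Nat.mul_succ] at hle
      omega
    have h := congrFun (hv₀.1 j hj) i
    simpa [brickProj, Pi.single_eq_of_ne hne] using h
  have h := hcoord _ hv₁
  rw [Matrix.add_vecMul, Pi.add_apply, hcoord _ hv₀] at h
  simpa using h
end

section
/- Let Λ ∈ GL_n(𝔽₂) and let 1 ≤ n_w ≤ δ−1. If the block submatrix Λ_{(n_w+1,1):(δ,n_w)} is the zero matrix, then for every set D = {v_w} × 𝔽₂^{m(δ−n_w)} in standard form of type (n_w, 0, δ−n_w), the image DΛ also has type (n_w, 0, δ−n_w): its first n_w boxes are white and its remaining δ−n_w boxes are black. -/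
/-!
Let `U` be the space of vectors whose first `m * nw` coordinates vanish (`tailSet`). The zero
block says exactly that `U` is stable under `v ↦ vΛ`; since this map is injective and `U` is
finite, it restricts to a bijection of `U`. A set in standard form is a coset `v₀ + U`, so its
image is the coset `v₀Λ + U`: its first `nw` bricks are those of `v₀Λ`, and each of the other
bricks takes every value.
-/

open Matrix

/-- The subspace `{0} × 𝔽₂^{n-k}` of vectors whose first `k` coordinates vanish, as a set. -/
def tailSet (n k : ℕ) : Set (Fin n → ZMod 2) :=
  {u | ∀ c : Fin n, (c : ℕ) < k → u c = 0}

lemma vecMul_mem_tailSet {n k : ℕ} {Λ : Matrix (Fin n) (Fin n) (ZMod 2)}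
    (hzero : ∀ r c : Fin n, k ≤ (r : ℕ) → (c : ℕ) < k → Λ r c = 0)
    {u : Fin n → ZMod 2} (hu : u ∈ tailSet n k) : Matrix.vecMul u Λ ∈ tailSet n k := by
  intro c hc
  rw [Matrix.vecMul_eq_sum, Finset.sum_apply]
  refine Finset.sum_eq_zero fun r _ => ?_
  rw [Pi.smul_apply, smul_eq_mul]
  rcases lt_or_ge (r : ℕ) k with hr | hr
  · rw [hu r hr, zero_mul]
  · rw [hzero r c hr hc, mul_zero]

/-- An injective self-map of the finite set `tailSet n k` is onto. -/
lemma exists_vecMul_eq_of_mem_tailSet {n k : ℕ} {Λ : Matrix (Fin n) (Fin n) (ZMod 2)}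
    (hΛ : IsUnit Λ) (hzero : ∀ r c : Fin n, k ≤ (r : ℕ) → (c : ℕ) < k → Λ r c = 0)
    {y : Fin n → ZMod 2} (hy : y ∈ tailSet n k) :
    ∃ u ∈ tailSet n k, Matrix.vecMul u Λ = y := by
  let f : tailSet n k → tailSet n k :=
    fun u => ⟨Matrix.vecMul u.1 Λ, vecMul_mem_tailSet hzero u.2⟩
  have hf : Function.Injective f := fun a b hab =>
    Subtype.ext (Matrix.vecMul_injective_of_isUnit hΛ (congrArg Subtype.val hab))
  obtain ⟨u, hu⟩ := Finite.surjective_of_injective hf ⟨y, hy⟩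
  exact ⟨u.1, u.2, congrArg Subtype.val hu⟩

lemma brickIdx_lt {m δ k : ℕ} {j : Fin δ} (hj : (j : ℕ) < k) (i : Fin m) :
    (brickIdx m δ j i : ℕ) < m * k := by
  have h : m * ((j : ℕ) + 1) ≤ m * k := Nat.mul_le_mul le_rfl hj
  have hi := i.isLt
  simp only [brickIdx]
  rw [Nat.mul_succ] at h
  omega

lemma exists_brickIdx_eq {m δ k : ℕ} (c : Fin (m * δ)) (hc : (c : ℕ) < m * k) :
    ∃ (j : Fin δ) (i : Fin m), (j : ℕ) < k ∧ brickIdx m δ j i = c := by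
  have hm : 0 < m := Nat.pos_of_ne_zero fun h => by simp [h] at hc
  exact ⟨⟨c / m, Nat.div_lt_of_lt_mul c.isLt⟩, ⟨c % m, Nat.mod_lt _ hm⟩,
    Nat.div_lt_of_lt_mul hc, Fin.ext (Nat.div_add_mod _ _)⟩

/-- **Lemma: sufficiency, non-ruled case.** If the block submatrix
`Λ_{(n_w+1,1):(δ,n_w)}` is zero, then for every `D = {v_w} × 𝔽₂^{m(δ-n_w)}` in standard
form of type `(n_w, 0, δ-n_w)`, the image `DΛ` also has type `(n_w, 0, δ-n_w)`. -/
theorem stmt_5 (m δ : ℕ) (hm : 2 ≤ m) (hδ : 2 ≤ δ)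
    (Λ : Matrix (Fin (m * δ)) (Fin (m * δ)) (ZMod 2)) (hΛ : IsUnit Λ)
    (nw : ℕ) (hnw1 : 1 ≤ nw) (hnw2 : nw ≤ δ - 1)
    (hzero : ∀ r c : Fin (m * δ), m * nw ≤ (r : ℕ) → (c : ℕ) < m * nw → Λ r c = 0) :
    ∀ w : Fin δ → Fin m → ZMod 2,
      HasType m δ ((fun v => Matrix.vecMul v Λ) '' StdSet m δ nw 0 w ∅)
        nw 0 (δ - nw) := by
  intro w
  -- The set in standard form is the coset `v₀ + tailSet` of this representative.
  let v₀ : Fin (m * δ) → ZMod 2 := fun c =>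
    if h : (c : ℕ) < m * nw then
      w (exists_brickIdx_eq c h).choose (exists_brickIdx_eq c h).choose_spec.choose
    else 0
  have brickIdx_inj : ∀ (j j' : Fin δ) (i i' : Fin m),
      brickIdx m δ j i = brickIdx m δ j' i' → j = j' ∧ i = i' := by
    intro j j' i i' h
    have h' : m * (j : ℕ) + i = m * j' + i' := congrArg Fin.val h
    have hd := congrArg (· / m) h'
    have hr := congrArg (· % m) h'
    simp only [Nat.mul_add_div (by omega : 0 < m), Nat.div_eq_of_lt i.isLt,
      Nat.div_eq_of_lt i'.isLt, Nat.mul_add_mod, Nat.mod_eq_of_lt i.isLt,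
      Nat.mod_eq_of_lt i'.isLt] at hd hr
    exact ⟨Fin.ext (by omega), Fin.ext hr⟩
  have hv₀ : ∀ j : Fin δ, (j : ℕ) < nw → brickProj m δ v₀ j = w j := by
    intro j hj
    funext i
    have h := brickIdx_lt (m := m) hj i
    have hs := (exists_brickIdx_eq _ h).choose_spec.choose_spec.2
    obtain ⟨h1, h2⟩ := brickIdx_inj _ _ _ _ hs
    simp only [brickProj, v₀, dif_pos h]
    exact congrArg₂ w h1 h2
  have hmem : ∀ v, v ∈ StdSet m δ nw 0 w ∅ ↔ v - v₀ ∈ tailSet (m * δ) (m * nw) := by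
    intro v
    constructor
    · rintro ⟨hv, -⟩ c hc
      obtain ⟨j, i, hj, rfl⟩ := exists_brickIdx_eq c hc
      have := congrFun ((hv j hj).trans (hv₀ j hj).symm) i
      exact sub_eq_zero.2 this
    · intro hv
      refine ⟨fun j hj => ?_, fun h => absurd h (by simp)⟩
      rw [← hv₀ j hj]
      funext i
      exact sub_eq_zero.1 (hv _ (brickIdx_lt hj i))
  refine ⟨by omega, by omega, fun j => ⟨fun hj => ?_, fun h1 h2 => by omega, fun hj => ?_⟩⟩
  · refine ⟨brickProj m δ (Matrix.vecMul v₀ Λ) j, Set.eq_singleton_iff_unique_mem.2 ⟨?_, ?_⟩⟩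
    · exact ⟨_, ⟨v₀, (hmem v₀).2 fun c _ => by simp, rfl⟩, rfl⟩
    · rintro _ ⟨_, ⟨v, hv, rfl⟩, rfl⟩
      funext i
      have h := vecMul_mem_tailSet hzero ((hmem v).1 hv) _ (brickIdx_lt hj i)
      rw [Matrix.sub_vecMul] at h
      exact sub_eq_zero.1 h
  · refine Set.eq_univ_of_forall fun y => ?_
    -- The correction to `v₀Λ` producing `y` in brick `j`; it is zero outside that brick.
    let t : Fin (m * δ) → ZMod 2 := fun c =>
      if h : ∃ i, brickIdx m δ j i = c then y h.choose - Matrix.vecMul v₀ Λ c else 0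
    have ht : t ∈ tailSet (m * δ) (m * nw) := by
      intro c hc
      refine dif_neg ?_
      rintro ⟨i, rfl⟩
      have h : m * nw ≤ m * (j : ℕ) := Nat.mul_le_mul le_rfl hj
      simp only [brickIdx] at hc
      omega
    obtain ⟨u, hu, hut⟩ := exists_vecMul_eq_of_mem_tailSet hΛ hzero ht
    refine ⟨_, ⟨v₀ + u, (hmem _).2 (by simpa using hu), rfl⟩, ?_⟩
    funext i
    have h : ∃ i', brickIdx m δ j i' = brickIdx m δ j i := ⟨i, rfl⟩
    simp only [brickProj, Matrix.add_vecMul, hut, Pi.add_apply, t, dif_pos h,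
      (brickIdx_inj _ _ _ _ h.choose_spec).2, add_sub_cancel]
end

section
/- Let Λ ∈ GL_n(𝔽₂). (Necessity) If some set D = {v_w} × R in standard form of type (δ−1, 1, 0) is such that DΛ also has type (δ−1, 1, 0) (first δ−1 boxes white, last box ruled), then the m × m(δ−1) matrix Λ_{(δ,1):(δ,δ−1)} has rank strictly less than m and the block Λ_{δ,δ} is nonzero. (Sufficiency) Conversely, if Λ_{(δ,1):(δ,δ−1)} has rank strictly less than m and Λ_{δ,δ} ≠ 0, then there exists a set D in standard form of type (δ−1, 1, 0) such that DΛ also has type (δ−1, 1, 0). -/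
/-!
Two distinct points of `{v_w} × R` differ by a nonzero vector `d` supported on the last brick, say
with last brick `x ≠ 0`. For such a `d`, the first `δ - 1` bricks of `d Λ` form `x · Λ_{(δ,1):(δ,δ-1)}`
and its last brick is `x · Λ_{δ,δ}` (`brickProj_vecMul_eq_zero_iff`, `brickProj_vecMul_last`).

Necessity: if the first `δ - 1` boxes of the image are white, then `x` lies in the left kernel of
`Λ_{(δ,1):(δ,δ-1)}`, so this matrix with `m` rows has rank `< m` (`rank_lt_iff_exists_vecMul`);
if moreover `Λ_{δ,δ} = 0`, then `d Λ = 0`, against the invertibility of `Λ`.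

Sufficiency: pick `x ≠ 0` in the left kernel and take `v_w = 0`, `R = {0, x}`. The image is `{0, d Λ}`,
where `d Λ ≠ 0` vanishes on the first `δ - 1` bricks; so its last box consists of exactly
two points, which is neither one point nor all of `𝔽₂^m` because `2 < 2 ^ m`.
-/

open Matrix

/-- Every coordinate belongs to some brick. -/
lemma exists_brickIdx (m δ : ℕ) (k : Fin (m * δ)) : ∃ j i, brickIdx m δ j i = k := by
  have hm : 0 < m := Nat.pos_of_ne_zero (by rintro rfl; have := k.isLt; simp at this)
  refine ⟨⟨k / m, Nat.div_lt_of_lt_mul k.isLt⟩, ⟨k % m, Nat.mod_lt _ hm⟩, ?_⟩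
  ext
  simp [brickIdx, Nat.div_add_mod]

lemma brickIdx_inj {m δ : ℕ} {j j' : Fin δ} {i i' : Fin m}
    (h : brickIdx m δ j i = brickIdx m δ j' i') : j = j' ∧ i = i' := by
  have h0 : m * j.val + i.val = m * j'.val + i'.val := congrArg Fin.val h
  have hm : 0 < m := lt_of_le_of_lt (Nat.zero_le _) i.isLt
  have h1 := congrArg (· / m) h0
  have h2 := congrArg (· % m) h0
  simp only [Nat.mul_add_div hm, Nat.mul_add_mod, Nat.div_eq_of_lt i.isLt,
    Nat.div_eq_of_lt i'.isLt, Nat.mod_eq_of_lt i.isLt, Nat.mod_eq_of_lt i'.isLt] at h1 h2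
  exact ⟨Fin.ext h1, Fin.ext h2⟩

lemma ext_brickProj {m δ : ℕ} {u v : Fin (m * δ) → ZMod 2}
    (h : ∀ j, brickProj m δ u j = brickProj m δ v j) : u = v := by
  funext k
  obtain ⟨j, i, rfl⟩ := exists_brickIdx m δ k
  exact congrFun (h j) i

/-- A vector can be prescribed brick by brick. -/
lemma exists_of_brickProj (m δ : ℕ) (f : Fin δ → Fin m → ZMod 2) :
    ∃ v, ∀ j, brickProj m δ v j = f j := by
  choose J I hJI using exists_brickIdx m δ
  refine ⟨fun k => f (J k) (I k), fun j => funext fun i => ?_⟩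
  obtain ⟨h1, h2⟩ := brickIdx_inj (hJI (brickIdx m δ j i))
  simp [brickProj, h1, h2]

lemma rank_lt_iff_exists_vecMul {m k : ℕ} (A : Matrix (Fin m) (Fin k) (ZMod 2)) :
    A.rank < m ↔ ∃ x, x ≠ 0 ∧ x ᵥ* A = 0 := by
  have key : A.rank = m ↔ Function.Injective A.vecMul := by
    rw [Matrix.vecMul_injective_iff, linearIndependent_iff_card_eq_finrank_span,
      Matrix.rank_eq_finrank_span_row, Fintype.card_fin, eq_comm]
    rfl
  have hle : A.rank ≤ m := by simpa using A.rank_le_card_height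
  rw [lt_iff_le_and_ne, and_iff_right hle, Ne, key]
  have := injective_iff_map_eq_zero A.vecMulLinear
  rw [show Function.Injective A.vecMul ↔ _ from this]
  simp only [Matrix.vecMulLinear_apply]
  push Not
  exact ⟨fun ⟨x, h1, h2⟩ => ⟨x, h2, h1⟩, fun ⟨x, h1, h2⟩ => ⟨x, h2, h1⟩⟩

section LastBrick

variable {m δ : ℕ} (Λ : Matrix (Fin (m * δ)) (Fin (m * δ)) (ZMod 2)) (l : Fin δ)
  (d : Fin (m * δ) → ZMod 2)

/-- A vector supported on brick `l` only meets the rows of `Λ` in that brick. -/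
lemma vecMul_of_support (hd : ∀ j ≠ l, brickProj m δ d j = 0) (c : Fin (m * δ)) :
    (d ᵥ* Λ) c = ∑ i, brickProj m δ d l i * Λ (brickIdx m δ l i) c := by
  refine (Fintype.sum_of_injective (brickIdx m δ l) (fun i i' h => (brickIdx_inj h).2) _ _
    (fun k hk => ?_) (fun i => rfl)).symm
  obtain ⟨j, i, rfl⟩ := exists_brickIdx m δ k
  have hj : j ≠ l := by
    rintro rfl
    exact hk ⟨i, rfl⟩
  have : d (brickIdx m δ j i) = 0 := congrFun (hd j hj) i
  simp [this]

lemma brickProj_vecMul_last (hd : ∀ j ≠ l, brickProj m δ d j = 0) :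
    brickProj m δ (d ᵥ* Λ) l = brickProj m δ d l ᵥ* block m δ Λ l l := by
  funext i
  exact vecMul_of_support Λ l d hd _

lemma brickProj_vecMul_eq_zero_iff (hd : ∀ j ≠ l, brickProj m δ d j = 0) (c : ℕ) (hc : c ≤ δ) :
    (∀ j : Fin δ, (j : ℕ) < c → brickProj m δ (d ᵥ* Λ) j = 0) ↔
      brickProj m δ d l ᵥ* rowBlock m δ Λ l c hc = 0 := by
  have hcoord : ∀ k : Fin (m * c), (brickProj m δ d l ᵥ* rowBlock m δ Λ l c hc) k =
      (d ᵥ* Λ) (Fin.castLE (Nat.mul_le_mul le_rfl hc) k) :=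
    fun k => (vecMul_of_support Λ l d hd _).symm
  constructor
  · intro h
    funext k
    rw [hcoord]
    obtain ⟨j, i, rfl⟩ := exists_brickIdx m c k
    exact congrFun (h (Fin.castLE hc j) j.isLt) i
  · intro h j hj
    funext i
    have := hcoord (brickIdx m c ⟨j, hj⟩ i)
    rw [h] at this
    exact this.symm

end LastBrick

/-- **Lemma: type `(δ-1,1,0)`.**
Necessity: if some `D = {v_w} × R` in standard form of type `(δ-1, 1, 0)` is such that
`DΛ` also has type `(δ-1, 1, 0)`, then `Λ_{(δ,1):(δ,δ-1)}` has rank `< m` and the block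
`Λ_{δ,δ}` is nonzero.  Sufficiency: conversely, if `Λ_{(δ,1):(δ,δ-1)}` has rank `< m` and
`Λ_{δ,δ} ≠ 0`, then there exists `D` in standard form of type `(δ-1, 1, 0)` with `DΛ` of
type `(δ-1, 1, 0)`. -/
theorem stmt_9 (m δ : ℕ) (hm : 2 ≤ m) (hδ : 2 ≤ δ)
    (Λ : Matrix (Fin (m * δ)) (Fin (m * δ)) (ZMod 2)) (hΛ : IsUnit Λ) :
    ((∃ D : Set (Fin (m * δ) → ZMod 2),
        StdForm m δ D (δ - 1) 1 0 ∧
        HasType m δ ((fun v => Matrix.vecMul v Λ) '' D) (δ - 1) 1 0) →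
      ((rowBlock m δ Λ ⟨δ - 1, by omega⟩ (δ - 1) (by omega)).rank < m ∧
        block m δ Λ ⟨δ - 1, by omega⟩ ⟨δ - 1, by omega⟩ ≠ 0)) ∧
    (((rowBlock m δ Λ ⟨δ - 1, by omega⟩ (δ - 1) (by omega)).rank < m ∧
        block m δ Λ ⟨δ - 1, by omega⟩ ⟨δ - 1, by omega⟩ ≠ 0) →
      ∃ D : Set (Fin (m * δ) → ZMod 2),
        StdForm m δ D (δ - 1) 1 0 ∧
        HasType m δ ((fun v => Matrix.vecMul v Λ) '' D) (δ - 1) 1 0) := by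
  obtain ⟨l, hl⟩ : ∃ l : Fin δ, l = ⟨δ - 1, by omega⟩ := ⟨_, rfl⟩
  have hlv : (l : ℕ) = δ - 1 := by rw [hl]
  have hne : ∀ j : Fin δ, j ≠ l ↔ (j : ℕ) < δ - 1 := fun j => by
    rw [Ne, Fin.ext_iff, hlv]
    omega
  have hinj := Matrix.vecMul_injective_of_isUnit hΛ
  rw [← hl]
  constructor
  · rintro ⟨D, ⟨-, -, w, R, hR, rfl⟩, -, -, hT⟩
    obtain ⟨a, ha, b, hb, hab⟩ := (Set.one_lt_ncard_iff_nontrivial_and_finite.1 (hR rfl).1).1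
    have hex : ∀ r ∈ R, ∃ v ∈ StdSet m δ (δ - 1) 1 w R, brickProj m δ v l = r := by
      intro r hr
      obtain ⟨v, hv⟩ := exists_of_brickProj m δ (Function.update w l r)
      refine ⟨v, ⟨fun j hj => ?_, fun _ j hj => ?_⟩, by simp [hv]⟩
      · rw [hv, Function.update_of_ne ((hne j).2 hj)]
      · obtain rfl : j = l := Fin.ext (hj.trans hlv.symm)
        simpa [hv] using hr
    obtain ⟨u, hu, rfl⟩ := hex a ha
    obtain ⟨v, hv, rfl⟩ := hex b hb
    have hd : ∀ j ≠ l, brickProj m δ (u - v) j = 0 := by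
      intro j hj
      have h1 := hu.1 j ((hne j).1 hj)
      have h2 := hv.1 j ((hne j).1 hj)
      exact sub_eq_zero.2 (h1.trans h2.symm)
    have hx : brickProj m δ (u - v) l ≠ 0 := fun h => hab (sub_eq_zero.1 h)
    have hwhite : ∀ j : Fin δ, (j : ℕ) < δ - 1 → brickProj m δ ((u - v) ᵥ* Λ) j = 0 := by
      intro j hj
      obtain ⟨p, hp⟩ := (hT j).1 hj
      have hmem : ∀ y ∈ StdSet m δ (δ - 1) 1 w R, brickProj m δ (y ᵥ* Λ) j = p := by
        intro y hy
        have : brickProj m δ (y ᵥ* Λ) j ∈ box m δ ((fun v => v ᵥ* Λ) '' StdSet m δ (δ - 1) 1 w R) j :=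
          ⟨_, ⟨y, hy, rfl⟩, rfl⟩
        rwa [hp] at this
      rw [Matrix.sub_vecMul]
      exact sub_eq_zero.2 ((hmem u hu).trans (hmem v hv).symm)
    refine ⟨(rank_lt_iff_exists_vecMul _).2 ⟨_, hx,
      (brickProj_vecMul_eq_zero_iff Λ l _ hd _ _).1 hwhite⟩, fun hB => ?_⟩
    have hzero : (u - v) ᵥ* Λ = 0 := by
      refine ext_brickProj fun j => ?_
      by_cases hj : j = l
      · subst hj
        rw [brickProj_vecMul_last Λ j _ hd, hB, Matrix.vecMul_zero]
        rfl
      · exact hwhite j ((hne j).1 hj)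
    have : u - v = 0 := hinj (hzero.trans (Matrix.zero_vecMul Λ).symm)
    exact hx (by rw [this]; rfl)
  · rintro ⟨hrank, -⟩
    obtain ⟨x, hx, hxA⟩ := (rank_lt_iff_exists_vecMul _).1 hrank
    obtain ⟨d, hd⟩ := exists_of_brickProj m δ (Function.update 0 l x)
    have hdl : brickProj m δ d l = x := by simp [hd]
    have hd0 : ∀ j ≠ l, brickProj m δ d j = 0 := fun j hj => by simp [hd, hj]
    have hfirst := (brickProj_vecMul_eq_zero_iff Λ l d hd0 (δ - 1) (by omega)).2 (by rwa [hdl])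
    have hlast : brickProj m δ (d ᵥ* Λ) l ≠ 0 := by
      intro h
      have hzero : d ᵥ* Λ = 0 := by
        refine ext_brickProj fun j => ?_
        by_cases hj : j = l
        · rw [hj, h]
          rfl
        · exact hfirst j ((hne j).1 hj)
      have h0 : d = 0 := hinj (hzero.trans (Matrix.zero_vecMul Λ).symm)
      apply hx
      rw [← hdl, h0]
      rfl
    have hpow : 2 ^ 2 ≤ 2 ^ m := Nat.pow_le_pow_right (by norm_num) hm
    have hD : StdSet m δ (δ - 1) 1 0 {0, x} = {0, d} := by
      ext v
      constructor
      · rintro ⟨h1, h2⟩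
        rcases h2 rfl l hlv with h | h
        · refine Or.inl (ext_brickProj fun j => ?_)
          by_cases hj : j = l
          · rw [hj, h]
            rfl
          · exact h1 j ((hne j).1 hj)
        · refine Or.inr (ext_brickProj fun j => ?_)
          by_cases hj : j = l
          · rw [hj, h, hdl]
          · rw [hd0 j hj]
            exact h1 j ((hne j).1 hj)
      · have hlj : ∀ j : Fin δ, (j : ℕ) = δ - 1 → j = l := fun j hj => Fin.ext (hj.trans hlv.symm)
        rintro (rfl | rfl)
        · exact ⟨fun j _ => rfl, fun _ j _ => Or.inl rfl⟩
        · refine ⟨fun j hj => hd0 j ((hne j).2 hj), fun _ j hj => Or.inr ?_⟩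
          rw [hlj j hj]
          exact hdl
    have hbox : ∀ j, box m δ ((fun v => v ᵥ* Λ) '' {0, d}) j = {0, brickProj m δ (d ᵥ* Λ) j} := by
      intro j
      rw [box, Set.image_pair, Set.image_pair, Matrix.zero_vecMul]
      rfl
    refine ⟨StdSet m δ (δ - 1) 1 0 {0, x}, ⟨by omega, le_rfl, 0, {0, x}, fun _ => ?_, rfl⟩,
      by omega, le_rfl, fun j => ?_⟩
    · rw [Set.ncard_pair hx.symm]
      omega
    · rw [hD, hbox]
      refine ⟨fun hj => ⟨0, by rw [hfirst j hj, Set.pair_eq_singleton]⟩, fun hj _ => ?_,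
        fun hj => absurd j.isLt (by omega)⟩
      obtain rfl : j = l := by
        by_contra h
        have := (hne j).1 h
        omega
      have hcard := Set.ncard_pair hlast.symm
      constructor
      · rintro ⟨a, ha⟩
        rw [ha, Set.ncard_singleton] at hcard
        omega
      · intro hb
        have hb' : ({0, brickProj m δ (d ᵥ* Λ) j} : Set (Fin m → ZMod 2)) = Set.univ := hb
        rw [hb', Set.ncard_univ, Nat.card_eq_fintype_card, Fintype.card_fun, ZMod.card,
          Fintype.card_fin] at hcard
        omega
end

section
/- Let Λ ∈ GL_n(𝔽₂) with δ ≥ 3. If Λ_{(n_w+2,1):(δ,n_w)} ≠ 0 for every n_w ∈ {1,…,δ−2}, then Λ is non-type-preserving: there exists a subset D ⊆ V in standard form of non-trivial type such that the type of DΛ differs from the type of D. -/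
/-! Taking `n_w = 1`, the hypothesis gives a nonzero entry `Λ r c` with `r` outside the first brick
and `c` inside it. Let `D = {0} × 𝔽₂^{m(δ-1)}`, of type `(1, 0, δ-1)`. Its first box is white, and
`D` contains both `0` and the basis vector `e_r`. The images `0` and `e_r Λ` (the `r`-th row of `Λ`)
differ in the coordinate `c` of the first brick, so the first box of `DΛ` is not white. -/

open Matrix

/-- **Corollary.** If `Λ_{(n_w+2,1):(δ,n_w)} ≠ 0` for every
`n_w ∈ {1, …, δ-2}`, then `Λ` is non-type-preserving: some subset `D` in standard form
of non-trivial type has `type(DΛ) ≠ type(D)`. -/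
theorem stmt_10 (m δ : ℕ) (hm : 2 ≤ m) (hδ : 3 ≤ δ)
    (Λ : Matrix (Fin (m * δ)) (Fin (m * δ)) (ZMod 2)) (hΛ : IsUnit Λ)
    (h : ∀ nw : ℕ, 1 ≤ nw → nw ≤ δ - 2 →
      ∃ r c : Fin (m * δ), m * (nw + 1) ≤ (r : ℕ) ∧ (c : ℕ) < m * nw ∧ Λ r c ≠ 0) :
    ∃ (D : Set (Fin (m * δ) → ZMod 2)) (nw nr nb : ℕ),
      StdForm m δ D nw nr nb ∧ nw ≠ δ ∧ nb ≠ δ ∧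
      ¬ SameType m δ D ((fun v => Matrix.vecMul v Λ) '' D) := by
  obtain ⟨r, c, hr, hc, hrc⟩ := h 1 le_rfl (by omega)
  refine ⟨StdSet m δ 1 0 (fun _ => 0) ∅, 1, 0, δ - 1, ⟨by omega, by omega, fun _ => 0, ∅,
    fun h0 => absurd h0 (by omega), rfl⟩, by omega, by omega, fun hS => ?_⟩
  let j : Fin δ := ⟨0, by omega⟩
  have h0 : (0 : Fin (m * δ) → ZMod 2) ∈ StdSet m δ 1 0 (fun _ => 0) ∅ :=
    ⟨fun _ _ => rfl, fun h0 => absurd h0 (by omega)⟩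
  have hsingle : (Pi.single r 1 : Fin (m * δ) → ZMod 2) ∈ StdSet m δ 1 0 (fun _ => 0) ∅ := by
    refine ⟨fun k hk => ?_, fun h0 => absurd h0 (by omega)⟩
    funext i
    have hne : brickIdx m δ k i ≠ r := by
      intro he
      have hv := congrArg Fin.val he
      have hk0 : (k : ℕ) = 0 := by omega
      have hi := i.isLt
      simp only [brickIdx, hk0] at hv
      omega
    simp [brickProj, hne]
  have hwhite : IsWhite (box m δ (StdSet m δ 1 0 (fun _ => 0) ∅) j) := by
    refine ⟨0, Set.eq_singleton_iff_unique_mem.2 ⟨⟨0, h0, rfl⟩, ?_⟩⟩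
    rintro _ ⟨v, hv, rfl⟩
    exact hv.1 j Nat.zero_lt_one
  obtain ⟨a, ha⟩ := (hS j).1.1 hwhite
  have e0 : brickProj m δ (Matrix.vecMul 0 Λ) j = a := by
    have : brickProj m δ (Matrix.vecMul 0 Λ) j ∈ ({a} : Set (Fin m → ZMod 2)) :=
      ha ▸ ⟨_, ⟨0, h0, rfl⟩, rfl⟩
    exact this
  have e1 : brickProj m δ (Matrix.vecMul (Pi.single r 1) Λ) j = a := by
    have : brickProj m δ (Matrix.vecMul (Pi.single r 1) Λ) j ∈ ({a} : Set (Fin m → ZMod 2)) :=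
      ha ▸ ⟨_, ⟨_, hsingle, rfl⟩, rfl⟩
    exact this
  have hcm : (c : ℕ) < m := by omega
  have hcidx : brickIdx m δ j ⟨c, hcm⟩ = c := by
    apply Fin.ext
    simp [brickIdx, j]
  have heq := congrFun (e1.trans e0.symm) ⟨c, hcm⟩
  simp only [brickProj, hcidx, Matrix.single_one_vecMul, Matrix.zero_vecMul, Pi.zero_apply] at heq
  exact hrc heq
end

section
/- Let m ≥ 2, δ ≥ 2, n = m·δ, and for s ∈ {0,1,…,n−1} let Λ_s ∈ GL_n(𝔽₂) be the permutation matrix of the bit rotation π_s, i.e. the i-th row of Λ_s is the standard basis row vector 𝐞_{π_s(i)}, where π_s(i) = ((i + s − 1) mod n) + 1 for 1 ≤ i ≤ n. Then Λ_s changes the type of every subset D ⊆ V in standard form of non-trivial type (i.e. for every such D the type of DΛ_s differs from the type of D) if and only if m ≤ s ≤ m(δ−1). -/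
/-!
The rotation sends coordinate `p` of `v` to coordinate `(p + s) % n` of `vΛ_s`, so it only
relabels coordinates.

If `s < m` or `s > m(δ - 1)`, some coordinate `q` of brick `0` is sent into brick `0` again. The
set `{v | v q = 0}` is in standard form of type `(0, 1, δ - 1)`, and its image is
`{v | v q' = 0}` with `q' = (q + s) % n` in brick `0`, which has the same type
(`coordZero_white`, `coordZero_black`).

If `m ≤ s ≤ m(δ - 1)`, let `D` be in standard form of non-trivial type. When `nw = 0`, box `0` of
`D` is ruled, but brick `0` of the image is filled from coordinates `≥ m`, which are all free, so
it is black. When `nw ≥ 1`, the type can only be preserved if no coordinate on which `D` is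
non-constant is sent into one of the first `nw` bricks (`no_varying`); a suitable
coordinate in the ruled brick or among the free ones violates this.
-/

open Matrix

/-- The permutation matrix of the bit rotation `i ↦ (i + s) mod n` (0-indexed); its `i`-th
row is the standard basis row vector with `1` in position `(i + s) mod n`. -/
def rotMatrix (n s : ℕ) : Matrix (Fin n) (Fin n) (ZMod 2) :=
  Matrix.of fun i j => if (j : ℕ) = ((i : ℕ) + s) % n then 1 else 0

/-- The rotation of coordinates by `s`. -/
def rot (n s : ℕ) (i : Fin n) : Fin n := ⟨(i.val + s) % n, Nat.mod_lt _ i.pos⟩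

lemma rot_injective (n s : ℕ) : Function.Injective (rot n s) := by
  intro i j h
  have h1 : (i.val + s) % n = (j.val + s) % n := congrArg Fin.val h
  have h2 : i.val ≡ j.val [MOD n] := Nat.ModEq.add_right_cancel' s h1
  exact Fin.ext (Nat.ModEq.eq_of_lt_of_lt h2 i.isLt j.isLt)

lemma rot_surjective (n s : ℕ) : Function.Surjective (rot n s) :=
  Finite.injective_iff_surjective.1 (rot_injective n s)

lemma vecMul_rot (n s : ℕ) (v : Fin n → ZMod 2) (p : Fin n) :
    Matrix.vecMul v (rotMatrix n s) (rot n s p) = v p := by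
  have h : ∀ i : Fin n, (((rot n s p : Fin n) : ℕ) = ((i : ℕ) + s) % n) ↔ i = p := by
    intro i
    constructor
    · intro h
      exact (rot_injective n s (Fin.ext h)).symm
    · rintro rfl
      rfl
  simp [Matrix.vecMul, dotProduct, rotMatrix, h]

lemma exists_brick (m δ : ℕ) (p : Fin (m * δ)) :
    ∃ (j : Fin δ) (i : Fin m), p = brickIdx m δ j i := by
  have hm : 0 < m := Nat.pos_of_mul_pos_right p.pos
  refine ⟨⟨p.val / m, Nat.div_lt_of_lt_mul p.isLt⟩, ⟨p.val % m, Nat.mod_lt _ hm⟩, ?_⟩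
  ext
  simp [brickIdx, Nat.div_add_mod]

/-- The vector with prescribed bricks. -/
def mkVec (m δ : ℕ) (f : Fin δ → Fin m → ZMod 2) : Fin (m * δ) → ZMod 2 := fun p =>
  f ⟨p.val / m, Nat.div_lt_of_lt_mul p.isLt⟩
    ⟨p.val % m, Nat.mod_lt _ (Nat.pos_of_mul_pos_right p.pos)⟩

lemma brickProj_mkVec (m δ : ℕ) (f : Fin δ → Fin m → ZMod 2) (j : Fin δ) :
    brickProj m δ (mkVec m δ f) j = f j := by
  funext i
  have hm : 0 < m := i.pos
  have h1 : (m * j.val + i.val) / m = j.val := by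
    rw [Nat.mul_add_div hm, Nat.div_eq_of_lt i.isLt, Nat.add_zero]
  have h2 : (m * j.val + i.val) % m = i.val := by
    rw [Nat.mul_add_mod, Nat.mod_eq_of_lt i.isLt]
  simp [brickProj, mkVec, brickIdx, h1, h2]

lemma mkVec_brickIdx (m δ : ℕ) (f : Fin δ → Fin m → ZMod 2) (j : Fin δ) (i : Fin m) :
    mkVec m δ f (brickIdx m δ j i) = f j i :=
  congrFun (brickProj_mkVec m δ f j) i

/-! ### The sets cut out by one coordinate of the first brick -/

/-- The set of vectors whose coordinate `i` of brick `j` vanishes. -/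
def coordZero (m δ : ℕ) (j : Fin δ) (i : Fin m) : Set (Fin (m * δ) → ZMod 2) :=
  {v | v (brickIdx m δ j i) = 0}

lemma box_coordZero_self (m δ : ℕ) (j : Fin δ) (i : Fin m) :
    box m δ (coordZero m δ j i) j = {r | r i = 0} := by
  ext r
  constructor
  · rintro ⟨v, hv, rfl⟩
    exact hv
  · intro hr
    refine ⟨mkVec m δ (fun _ => r), ?_, brickProj_mkVec _ _ _ _⟩
    simpa [coordZero, mkVec_brickIdx] using hr

lemma box_coordZero_ne (m δ : ℕ) (j k : Fin δ) (i : Fin m) (hk : k ≠ j) :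
    box m δ (coordZero m δ j i) k = Set.univ := by
  refine Set.eq_univ_of_forall fun r => ?_
  refine ⟨mkVec m δ (fun l => if l = k then r else 0), ?_, ?_⟩
  · simp [coordZero, mkVec_brickIdx, hk.symm]
  · simp [brickProj_mkVec]

lemma exists_two (m : ℕ) (hm : 2 ≤ m) (i : Fin m) :
    ∃ a b : Fin m → ZMod 2, a i = 0 ∧ b i = 0 ∧ a ≠ b := by
  have : Nontrivial (Fin m) := Fin.nontrivial_iff_two_le.2 hm
  obtain ⟨k, hk⟩ := exists_ne i
  refine ⟨0, Pi.single k 1, rfl, by simp [hk.symm], fun h => ?_⟩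
  have := congrFun h k
  simp at this

lemma coordZero_white (m δ : ℕ) (hm : 2 ≤ m) (j k : Fin δ) (i : Fin m) :
    ¬ IsWhite (box m δ (coordZero m δ j i) k) := by
  rintro ⟨c, hc⟩
  obtain ⟨a, b, ha, hb, hab⟩ := exists_two m hm i
  have key : ∀ r : Fin m → ZMod 2, r i = 0 → r = c := by
    intro r hr
    have : r ∈ box m δ (coordZero m δ j i) k := by
      by_cases h : k = j
      · subst h
        rw [box_coordZero_self]
        exact hr
      · rw [box_coordZero_ne m δ j k i h]
        trivial
    rw [hc] at this
    exact this
  exact hab ((key a ha).trans (key b hb).symm)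

lemma coordZero_black (m δ : ℕ) (j k : Fin δ) (i : Fin m) :
    IsBlack (box m δ (coordZero m δ j i) k) ↔ k ≠ j := by
  constructor
  · rintro h rfl
    rw [IsBlack, box_coordZero_self] at h
    have : (fun _ => 1 : Fin m → ZMod 2) ∈ {r : Fin m → ZMod 2 | r i = 0} := h ▸ Set.mem_univ _
    simp at this
  · exact box_coordZero_ne m δ j k i

lemma coordZero_std (m δ : ℕ) (hm : 2 ≤ m) (hδ : 0 < δ) (i : Fin m) :
    StdForm m δ (coordZero m δ ⟨0, hδ⟩ i) 0 1 (δ - 1) := by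
  refine ⟨by omega, le_rfl, 0, {r | r i = 0}, fun _ => ⟨?_, ?_⟩, ?_⟩
  · obtain ⟨a, b, ha, hb, hab⟩ := exists_two m hm i
    exact (Set.one_lt_ncard_iff (Set.toFinite _)).2 ⟨a, b, ha, hb, hab⟩
  · have h : {r : Fin m → ZMod 2 | r i = 0} ⊂ Set.univ := by
      rw [Set.ssubset_univ_iff]
      intro h
      have : (fun _ => 1 : Fin m → ZMod 2) ∈ {r : Fin m → ZMod 2 | r i = 0} :=
        h ▸ Set.mem_univ _
      simp at this
    have h2 := Set.ncard_lt_ncard h (Set.toFinite _)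
    rw [Set.ncard_univ, Nat.card_eq_fintype_card, Fintype.card_fun, ZMod.card,
      Fintype.card_fin] at h2
    omega
  · ext v
    constructor
    · intro hv
      refine ⟨fun j hj => absurd hj (Nat.not_lt_zero _), fun _ j hj => ?_⟩
      have : j = ⟨0, hδ⟩ := Fin.ext hj
      subst this
      exact hv
    · rintro ⟨-, h⟩
      exact h rfl ⟨0, hδ⟩ rfl

lemma coordZero_image (m δ s : ℕ) (j j' : Fin δ) (i i' : Fin m)
    (h : rot (m * δ) s (brickIdx m δ j i) = brickIdx m δ j' i') :
    (fun v => Matrix.vecMul v (rotMatrix (m * δ) s)) '' coordZero m δ j i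
      = coordZero m δ j' i' := by
  ext u
  constructor
  · rintro ⟨v, hv, rfl⟩
    simp only [coordZero, Set.mem_ofPred_eq] at hv ⊢
    rw [← h, vecMul_rot, hv]
  · intro hu
    refine ⟨fun p => u (rot (m * δ) s p), ?_, ?_⟩
    · simp only [coordZero, Set.mem_ofPred_eq] at hu ⊢
      rw [h, hu]
    · funext x
      obtain ⟨p, rfl⟩ := rot_surjective (m * δ) s x
      simp only [vecMul_rot]

/-- A rotation keeping some coordinate of the first brick inside the first brick preserves the
type of a set of type `(0, 1, δ - 1)`. -/
lemma rot_not_changing (m δ : ℕ) (hm : 2 ≤ m) (hδ : 2 ≤ δ) (s q : ℕ) (hq : q < m)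
    (hqs : (q + s) % (m * δ) < m) :
    ∃ (D : Set (Fin (m * δ) → ZMod 2)) (nw nr nb : ℕ),
      StdForm m δ D nw nr nb ∧ nw ≠ δ ∧ nb ≠ δ ∧
      SameType m δ D ((fun v => Matrix.vecMul v (rotMatrix (m * δ) s)) '' D) := by
  have h0 : 0 < δ := by omega
  refine ⟨coordZero m δ ⟨0, h0⟩ ⟨q, hq⟩, 0, 1, δ - 1, coordZero_std m δ hm h0 _, by omega,
    by omega, ?_⟩
  rw [coordZero_image m δ s ⟨0, h0⟩ ⟨0, h0⟩ ⟨q, hq⟩ ⟨_, hqs⟩ (by simp [rot, brickIdx])]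
  intro k
  simp [coordZero_white m δ hm, coordZero_black]

/-! ### Rotations by at least one brick in both directions -/

/-- If the first `nw` boxes of `D` are white and the type of `D` is preserved, then no coordinate
on which `D` is non-constant is rotated into the first `nw` bricks. -/
lemma no_varying (m δ s nw : ℕ) (D : Set (Fin (m * δ) → ZMod 2))
    (hw : ∀ j : Fin δ, (j : ℕ) < nw → IsWhite (box m δ D j))
    (hST : SameType m δ D ((fun v => Matrix.vecMul v (rotMatrix (m * δ) s)) '' D))
    (p : Fin (m * δ)) (hp : (p.val + s) % (m * δ) < m * nw)
    (v v' : Fin (m * δ) → ZMod 2) (hv : v ∈ D) (hv' : v' ∈ D) : v p = v' p := by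
  obtain ⟨j, i, hji⟩ := exists_brick m δ (rot (m * δ) s p)
  have hval : (p.val + s) % (m * δ) = m * j.val + i.val := congrArg Fin.val hji
  have hj : j.val < nw := by
    rw [hval] at hp
    exact Nat.lt_of_mul_lt_mul_left (lt_of_le_of_lt (Nat.le_add_right _ _) hp)
  obtain ⟨a, ha⟩ := (hST j).1.1 (hw j hj)
  have key : ∀ u ∈ D, u p = a i := by
    intro u hu
    have hmem : brickProj m δ (Matrix.vecMul u (rotMatrix (m * δ) s)) j ∈ ({a} : Set _) := by
      rw [← ha]
      exact ⟨_, ⟨u, hu, rfl⟩, rfl⟩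
    have h2 := congrFun (Set.mem_singleton_iff.1 hmem) i
    rw [brickProj, ← hji, vecMul_rot] at h2
    exact h2
  rw [key v hv, key v' hv']

lemma mkVec_mem_std (m δ nw nr : ℕ) (w : Fin δ → Fin m → ZMod 2) (R : Set (Fin m → ZMod 2))
    (r : Fin m → ZMod 2) (hr : nr = 1 → r ∈ R) :
    mkVec m δ (fun j => if (j : ℕ) < nw then w j else r) ∈ StdSet m δ nw nr w R := by
  refine ⟨fun j hj => ?_, fun h1 j hj => ?_⟩
  · rw [brickProj_mkVec, if_pos hj]
  · rw [brickProj_mkVec, if_neg (by omega)]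
    exact hr h1

lemma update_mem_std (m δ nw nr : ℕ) (w : Fin δ → Fin m → ZMod 2) (R : Set (Fin m → ZMod 2))
    (v : Fin (m * δ) → ZMod 2) (hv : v ∈ StdSet m δ nw nr w R) (p : Fin (m * δ))
    (hp : m * (nw + nr) ≤ p.val) (c : ZMod 2) :
    Function.update v p c ∈ StdSet m δ nw nr w R := by
  have key : ∀ j : Fin δ, (j : ℕ) < nw + nr →
      brickProj m δ (Function.update v p c) j = brickProj m δ v j := by
    intro j hj
    funext i
    refine Function.update_of_ne (fun h => ?_) _ _
    have h1 : m * j.val + i.val = p.val := congrArg Fin.val h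
    have h2 : m * (j.val + 1) ≤ m * (nw + nr) := Nat.mul_le_mul le_rfl hj
    have h3 := i.isLt
    rw [Nat.mul_succ] at h2
    omega
  refine ⟨fun j hj => ?_, fun h1 j hj => ?_⟩
  · rw [key j (by omega)]
    exact hv.1 j hj
  · rw [key j (by omega)]
    exact hv.2 h1 j hj

lemma rot_changing (m δ : ℕ) (s : ℕ) (hm : 2 ≤ m) (hδ : 2 ≤ δ)
    (h1 : m ≤ s) (h2 : s ≤ m * (δ - 1)) (nw nr nb : ℕ)
    (hsum : nw + nr + nb = δ) (hnr : nr ≤ 1) (w : Fin δ → Fin m → ZMod 2)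
    (R : Set (Fin m → ZMod 2)) (hR : nr = 1 → 2 ≤ R.ncard ∧ R.ncard ≤ 2 ^ m - 1)
    (hnw : nw ≠ δ) (hnb : nb ≠ δ)
    (hST : SameType m δ (StdSet m δ nw nr w R)
      ((fun v => Matrix.vecMul v (rotMatrix (m * δ) s)) '' StdSet m δ nw nr w R)) : False := by
  have hn : m * (δ - 1) + m = m * δ := by
    rw [← Nat.mul_succ]
    congr 1
    omega
  have hR2 : nr = 1 → ∃ a b, a ∈ R ∧ b ∈ R ∧ a ≠ b := fun h =>
    (Set.one_lt_ncard_iff (Set.toFinite _)).1 (hR h).1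
  obtain ⟨r, hr⟩ : ∃ r : Fin m → ZMod 2, nr = 1 → r ∈ R := by
    by_cases h : nr = 1
    · obtain ⟨a, _, ha, _⟩ := hR2 h
      exact ⟨a, fun _ => ha⟩
    · exact ⟨0, fun h' => absurd h' h⟩
  have hv0 := mkVec_mem_std m δ nw nr w R r hr
  set v0 := mkVec m δ (fun j => if (j : ℕ) < nw then w j else r) with hv0def
  rcases Nat.eq_zero_or_pos nw with h0 | hpos
  · subst h0
    have hnr1 : nr = 1 := by omega
    have hδ0 : 0 < δ := by omega
    -- Brick `0` of the image consists of free coordinates of `D`.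
    have hblack : IsBlack (box m δ
        ((fun v => Matrix.vecMul v (rotMatrix (m * δ) s)) '' StdSet m δ 0 nr w R) ⟨0, hδ0⟩) := by
      refine Set.eq_univ_of_forall fun t => ?_
      let v : Fin (m * δ) → ZMod 2 := fun x =>
        if x.val < m then v0 x else mkVec m δ (fun _ => t) (rot (m * δ) s x)
      have hv : v ∈ StdSet m δ 0 nr w R := by
        refine ⟨fun j hj => absurd hj (Nat.not_lt_zero _), fun hh j hj => ?_⟩
        have : brickProj m δ v j = brickProj m δ v0 j := by
          funext i
          have : (brickIdx m δ j i).val < m := by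
            simp [brickIdx, hj]
          simp [brickProj, v, this]
        rw [this]
        exact hv0.2 hh j hj
      refine ⟨_, ⟨v, hv, rfl⟩, ?_⟩
      funext i
      obtain ⟨p, hp⟩ := rot_surjective (m * δ) s (brickIdx m δ ⟨0, hδ0⟩ i)
      have hpm : ¬ p.val < m := by
        intro hlt
        have hval : (p.val + s) % (m * δ) = m * 0 + i.val := congrArg Fin.val hp
        have := i.isLt
        rw [Nat.mod_eq_of_lt (by omega)] at hval
        omega
      simp only [brickProj]
      rw [← hp, vecMul_rot]
      simp only [v, if_neg hpm]
      rw [hp, mkVec_brickIdx]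
    have hb := (hST ⟨0, hδ0⟩).2.2 hblack
    have hRuniv : R = Set.univ := by
      refine Set.eq_univ_of_forall fun t => ?_
      have : t ∈ box m δ (StdSet m δ 0 nr w R) ⟨0, hδ0⟩ := by
        rw [hb]
        trivial
      obtain ⟨v, hv, rfl⟩ := this
      exact hv.2 hnr1 _ rfl
    have hc := (hR hnr1).2
    rw [hRuniv, Set.ncard_univ, Nat.card_eq_fintype_card, Fintype.card_fun, ZMod.card,
      Fintype.card_fin] at hc
    have : 0 < 2 ^ m := by positivity
    omega
  · have hw : ∀ j : Fin δ, (j : ℕ) < nw → IsWhite (box m δ (StdSet m δ nw nr w R) j) := by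
      intro j hj
      refine ⟨w j, Set.eq_singleton_iff_unique_mem.2 ⟨⟨v0, hv0, hv0.1 j hj⟩, ?_⟩⟩
      rintro _ ⟨v, hv, rfl⟩
      exact hv.1 j hj
    have hvar := no_varying m δ s nw _ hw hST
    have hfree : ∀ p : Fin (m * δ), m * (nw + nr) ≤ p.val → m * nw ≤ (p.val + s) % (m * δ) := by
      intro p hp
      by_contra hlt
      have := hvar p (not_le.1 hlt) v0 _ hv0
        (update_mem_std m δ nw nr w R v0 hv0 p hp (v0 p + 1))
      simp at this
    have hruled : nr = 1 → ∃ p : Fin (m * δ), m * nw ≤ p.val ∧ p.val < m * nw + m ∧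
        m * nw ≤ (p.val + s) % (m * δ) := by
      intro h
      obtain ⟨a, b, ha, hb, hab⟩ := hR2 h
      obtain ⟨i, hi⟩ := Function.ne_iff.1 hab
      have hlt : nw < δ := by omega
      refine ⟨brickIdx m δ ⟨nw, hlt⟩ i, by simp [brickIdx], by simp [brickIdx], ?_⟩
      by_contra hcon
      have := hvar _ (not_le.1 hcon) _ _ (mkVec_mem_std m δ nw nr w R a fun _ => ha)
        (mkVec_mem_std m δ nw nr w R b fun _ => hb)
      simp [mkVec_brickIdx] at this
      exact hi this
    have hn2 : m * δ = m * nw + m * nr + m * nb := by rw [← hsum]; ring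
    have hadd : m * (nw + nr) = m * nw + m * nr := Nat.mul_add _ _ _
    have hmnw : m ≤ m * nw := Nat.le_mul_of_pos_right m hpos
    have wrap : ∀ p, p < m * δ → m * δ ≤ p + s → (p + s) % (m * δ) = p + s - m * δ := by
      intro p hp hle
      rw [Nat.mod_eq_sub_mod hle, Nat.mod_eq_of_lt (by omega)]
    clear hR hR2 hr
    by_cases hb : nb = 0
    · have h : nr = 1 := by omega
      obtain ⟨p, hp1, hp2, hp3⟩ := hruled h
      clear hruled
      subst hb h
      rw [wrap p p.isLt (by omega)] at hp3
      omega
    · have hmb : m ≤ m * nb := Nat.le_mul_of_pos_right m (Nat.pos_of_ne_zero hb)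
      by_cases hex : nr = 1 ∧ m * δ = m + s
      · -- The only rotation moving no free coordinate onto a white brick: the ruled brick moves
        -- exactly onto the last white one.
        obtain ⟨h, hms⟩ := hex
        obtain ⟨p, hp1, hp2, hp3⟩ := hruled h
        clear hruled
        rw [wrap p p.isLt (by omega)] at hp3
        omega
      · clear hruled
        have hmr : m * nr < m * δ - s := by
          rcases Nat.le_one_iff_eq_zero_or_eq_one.1 hnr with h | h
          · subst h
            omega
          · subst h
            omega
        have hlast := hfree ⟨m * δ - 1, by omega⟩ (by simp only; omega)
        simp only at hlast
        rw [wrap _ (by omega) (by omega)] at hlast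
        -- The first free coordinate that wraps around.
        have hfst := hfree ⟨max (m * δ - s) (m * (nw + nr)), by omega⟩ (by simp only; omega)
        simp only at hfst
        rw [wrap _ (by omega) (by omega)] at hfst
        omega

/-- **rotations.** The rotation matrix `Λ_s` changes the type of every
subset `D ⊆ V` in standard form of non-trivial type if and only if
`m ≤ s ≤ m(δ - 1)`. -/
theorem stmt_11 (m δ : ℕ) (hm : 2 ≤ m) (hδ : 2 ≤ δ) (s : ℕ) (hs : s < m * δ) :
    (∀ (D : Set (Fin (m * δ) → ZMod 2)) (nw nr nb : ℕ),
        StdForm m δ D nw nr nb → nw ≠ δ → nb ≠ δ →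
        ¬ SameType m δ D ((fun v => Matrix.vecMul v (rotMatrix (m * δ) s)) '' D)) ↔
      (m ≤ s ∧ s ≤ m * (δ - 1)) := by
  constructor
  · intro H
    have hn : m * (δ - 1) + m = m * δ := by
      rw [← Nat.mul_succ]
      congr 1
      omega
    have key : ∀ q, q < m → m ≤ (q + s) % (m * δ) := by
      intro q hq
      by_contra hlt
      obtain ⟨D, nw, nr, nb, hD, h1, h2, hST⟩ :=
        rot_not_changing m δ hm hδ s q hq (not_le.1 hlt)
      exact H D nw nr nb hD h1 h2 hST
    constructor
    · have := key 0 (by omega)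
      rwa [Nat.zero_add, Nat.mod_eq_of_lt hs] at this
    · by_contra hlt
      have := key (m - 1) (by omega)
      rw [Nat.mod_eq_sub_mod (by omega), Nat.mod_eq_of_lt (by omega)] at this
      omega
  · rintro ⟨h1, h2⟩ D nw nr nb ⟨hsum, hnr, w, R, hR, rfl⟩ hnw hnb hST
    exact rot_changing m δ s hm hδ h1 h2 nw nr nb hsum hnr w R hR hnw hnb hST
end

section
/- Let m = 4, δ = 8, n = 32, and let Λ₁₁ ∈ GL₃₂(𝔽₂) be the permutation matrix of the bit rotation by 11 used in the GOST cipher, i.e. the i-th row of Λ₁₁ is the standard basis row vector 𝐞_{π(i)} with π(i) = ((i + 11 − 1) mod 32) + 1 for 1 ≤ i ≤ 32. Then Λ₁₁ changes the type of every subset D ⊆ 𝔽₂³² in standard form of non-trivial type: for every such D, the type of DΛ₁₁ differs from the type of D. -/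
/-!
Rotation by `11 = 2 · 4 + 3` fills brick `j` (0-indexed, modulo `8`) of the image with positions
`1, 2, 3` of brick `j + 5` and position `0` of brick `j + 6`. On a standard set, coordinates in
white bricks are fixed and coordinates in black bricks are free and independent
(`stdSet_fixed`, `stdSet_free`), so the kind of every rotated box that avoids the ruled brick is
known.

Without a ruled brick, the rotated box that takes its coordinates from the last white and the
first black brick has both a fixed and a free coordinate, hence is ruled, whereas the original
set has no ruled box. With a ruled brick in position `nw`, the rotated box `nw` is read from
bricks `nw + 5` and `nw + 6`. These are both black if `nw < 2` and both white if `nw > 2`, so the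
rotated box is not ruled. If `nw = 2`, the rotated box `4` has fixed coordinates coming from the
white brick `1`, whereas the original box `4` is black.
-/

open Matrix

/-! ### Standard sets, coordinate by coordinate -/

/-- The bit rotation by `11` moves the entry in position `k + 21 ≡ k - 11 (mod 32)` to
position `k`. -/
lemma vecMul_rot_s12 (v : Fin (4 * 8) → ZMod 2) (k : Fin (4 * 8)) :
    Matrix.vecMul v (rotMatrix (4 * 8) 11) k = v ⟨(k.val + 21) % 32, by omega⟩ := by
  unfold Matrix.vecMul dotProduct
  rw [Finset.sum_eq_single (⟨(k.val + 21) % 32, by omega⟩ : Fin (4 * 8))]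
  · have h : (k : ℕ) = ((k.val + 21) % 32 + 11) % (4 * 8) := by omega
    simp only [rotMatrix, Matrix.of_apply]
    rw [if_pos h, mul_one]
  · intro b _ hb
    have h : ¬ (k : ℕ) = (b.val + 11) % (4 * 8) := by
      intro h
      apply hb
      ext
      simp only
      omega
    simp only [rotMatrix, Matrix.of_apply]
    rw [if_neg h, mul_zero]
  · intro h
    exact absurd (Finset.mem_univ _) h

/-- The coordinates of a member of a standard set are fixed on the white bricks. -/
lemma stdSet_fixed {nw nr : ℕ} {w : Fin 8 → Fin 4 → ZMod 2} {R : Set (Fin 4 → ZMod 2)}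
    {v v' : Fin (4 * 8) → ZMod 2} (hv : v ∈ StdSet 4 8 nw nr w R)
    (hv' : v' ∈ StdSet 4 8 nw nr w R) (k : Fin (4 * 8)) (hk : k.val / 4 < nw) :
    v k = v' k := by
  have hj : k.val / 4 < 8 := by omega
  have hi : k.val % 4 < 4 := by omega
  have h := (hv.1 ⟨k.val / 4, hj⟩ hk).trans (hv'.1 ⟨k.val / 4, hj⟩ hk).symm
  have h2 := congrFun h ⟨k.val % 4, hi⟩
  have e : brickIdx 4 8 ⟨k.val / 4, hj⟩ ⟨k.val % 4, hi⟩ = k := by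
    ext
    simp only [brickIdx]
    omega
  simpa only [brickProj, e] using h2

/-- The coordinates of a member of a standard set are arbitrary on the black bricks, and the
ruled brick, if any, may be any `r ∈ R`. -/
lemma stdSet_free {nw nr : ℕ} {w : Fin 8 → Fin 4 → ZMod 2} {R : Set (Fin 4 → ZMod 2)}
    (r : Fin 4 → ZMod 2) (hr : nr = 1 → r ∈ R) (hnr : nr ≤ 1) (u : Fin (4 * 8) → ZMod 2) :
    ∃ v ∈ StdSet 4 8 nw nr w R, (∀ k : Fin (4 * 8), nw + nr ≤ k.val / 4 → v k = u k) ∧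
      (nr = 1 → ∀ j : Fin 8, j.val = nw → brickProj 4 8 v j = r) := by
  have hdiv : ∀ (j : Fin 8) (i : Fin 4), (brickIdx 4 8 j i).val / 4 = j.val := by
    intro j i
    simp only [brickIdx]
    omega
  have hmod : ∀ (j : Fin 8) (i : Fin 4), (brickIdx 4 8 j i).val % 4 = i.val := by
    intro j i
    simp only [brickIdx]
    omega
  let v : Fin (4 * 8) → ZMod 2 := fun k =>
    if k.val / 4 < nw then w ⟨k.val / 4, by omega⟩ ⟨k.val % 4, by omega⟩
    else if k.val / 4 < nw + nr then r ⟨k.val % 4, by omega⟩ else u k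
  have hv1 : nr = 1 → ∀ j : Fin 8, j.val = nw → brickProj 4 8 v j = r := by
    intro h1 j hj
    funext i
    simp only [brickProj, v, hdiv, hmod]
    rw [if_neg (by omega), if_pos (by omega)]
  refine ⟨v, ⟨?_, ?_⟩, ?_, hv1⟩
  · intro j hj
    funext i
    simp only [brickProj, v, hdiv, hmod]
    rw [if_pos hj]
  · intro h1 j hj
    rw [hv1 h1 j hj]
    exact hr h1
  · intro k hk
    simp only [v]
    rw [if_neg (by omega), if_neg (by omega)]

/-! ### Kinds of boxes -/

lemma not_black_of_fixed {δ : ℕ} {E : Set (Fin (4 * δ) → ZMod 2)} {j : Fin δ} (i : Fin 4)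
    (h : ∀ v ∈ E, ∀ v' ∈ E, v (brickIdx 4 δ j i) = v' (brickIdx 4 δ j i)) :
    ¬ IsBlack (box 4 δ E j) := by
  intro hb
  have h0 : (fun _ => 0 : Fin 4 → ZMod 2) ∈ box 4 δ E j := by rw [hb]; trivial
  have h1 : (fun _ => 1 : Fin 4 → ZMod 2) ∈ box 4 δ E j := by rw [hb]; trivial
  obtain ⟨v, hv, e⟩ := h0
  obtain ⟨v', hv', e'⟩ := h1
  have a := congrFun e i
  have b := congrFun e' i
  have c := h v hv v' hv'
  simp only [brickProj] at a b
  rw [a, b] at c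
  exact absurd c (by decide)

lemma not_white_of_free {δ : ℕ} {E : Set (Fin (4 * δ) → ZMod 2)} {j : Fin δ} (i : Fin 4)
    (h : ∀ c : ZMod 2, ∃ v ∈ E, v (brickIdx 4 δ j i) = c) :
    ¬ IsWhite (box 4 δ E j) := by
  rintro ⟨a, ha⟩
  have key : ∀ c : ZMod 2, a i = c := by
    intro c
    obtain ⟨v, hv, e⟩ := h c
    have hm : brickProj 4 δ v j ∈ box 4 δ E j := ⟨v, hv, rfl⟩
    rw [ha, Set.mem_singleton_iff] at hm
    rw [← hm]
    exact e
  exact absurd ((key 0).symm.trans (key 1)) (by decide)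

lemma white_of_fixed {δ : ℕ} {E : Set (Fin (4 * δ) → ZMod 2)} {j : Fin δ} (hE : E.Nonempty)
    (h : ∀ v ∈ E, ∀ v' ∈ E, ∀ i, v (brickIdx 4 δ j i) = v' (brickIdx 4 δ j i)) :
    IsWhite (box 4 δ E j) := by
  obtain ⟨v, hv⟩ := hE
  refine ⟨brickProj 4 δ v j, Set.eq_singleton_iff_unique_mem.2 ⟨⟨v, hv, rfl⟩, ?_⟩⟩
  rintro _ ⟨v', hv', rfl⟩
  funext i
  exact h v' hv' v hv i

lemma black_of_free {δ : ℕ} {E : Set (Fin (4 * δ) → ZMod 2)} {j : Fin δ}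
    (h : ∀ u : Fin 4 → ZMod 2, ∃ v ∈ E, ∀ i, v (brickIdx 4 δ j i) = u i) :
    IsBlack (box 4 δ E j) := by
  refine Set.eq_univ_of_forall fun u => ?_
  obtain ⟨v, hv, e⟩ := h u
  exact ⟨v, hv, funext e⟩

/-! ### Boxes of a standard set and of its rotation -/

/-- Position `i` of brick `j` of the rotated vector is read from this position: positions
`1, 2, 3` of brick `j + 5` for `i = 0, 1, 2`, and position `0` of brick `j + 6` for `i = 3`
(bricks taken modulo `8`). -/
def src (j : Fin 8) (i : Fin 4) : Fin (4 * 8) := ⟨(4 * j.val + i.val + 21) % 32, by omega⟩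

lemma rot_apply (v : Fin (4 * 8) → ZMod 2) (j : Fin 8) (i : Fin 4) :
    Matrix.vecMul v (rotMatrix (4 * 8) 11) (brickIdx 4 8 j i) = v (src j i) := by
  rw [vecMul_rot_s12]
  rfl

lemma src_injective (j : Fin 8) : Function.Injective (src j) := by
  intro a b h
  have := congrArg Fin.val h
  simp only [src] at this
  ext
  omega

lemma brickIdx_injective (j : Fin 8) : Function.Injective (brickIdx 4 8 j) := by
  intro a b h
  have := congrArg Fin.val h
  simp only [brickIdx] at this
  ext
  omega

/-- **GOST rotation.** With `m = 4`, `δ = 8`, `n = 32`, the GOST rotation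
matrix `Λ₁₁` changes the type of every subset `D ⊆ 𝔽₂³²` in standard form of non-trivial
type. -/
theorem stmt_12 :
    ∀ (D : Set (Fin (4 * 8) → ZMod 2)) (nw nr nb : ℕ),
      StdForm 4 8 D nw nr nb → nw ≠ 8 → nb ≠ 8 →
      ¬ SameType 4 8 D ((fun v => Matrix.vecMul v (rotMatrix (4 * 8) 11)) '' D) := by
  rintro D nw nr nb ⟨hsum, hnr, w, R, hR, rfl⟩ hnw hnb hs
  -- a point of `R`, irrelevant when there is no ruled brick
  obtain ⟨r, hr⟩ : ∃ r, nr = 1 → r ∈ R := by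
    by_cases h1 : nr = 1
    · obtain ⟨r, hr⟩ := Set.nonempty_of_ncard_ne_zero (s := R) (by have := hR h1; omega)
      exact ⟨r, fun _ => hr⟩
    · exact ⟨0, fun h => absurd h h1⟩
  have hfree := stdSet_free (nw := nw) (w := w) r hr hnr
  have hne : (StdSet 4 8 nw nr w R).Nonempty := by
    obtain ⟨v, hv, -⟩ := hfree 0
    exact ⟨v, hv⟩
  set T : (Fin (4 * 8) → ZMod 2) → Fin (4 * 8) → ZMod 2 :=
    fun v => Matrix.vecMul v (rotMatrix (4 * 8) 11) with hT
  have hTa : ∀ v j i, T v (brickIdx 4 8 j i) = v (src j i) := rot_apply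
  have rot_not_black : ∀ j i, (src j i).val / 4 < nw →
      ¬ IsBlack (box 4 8 (T '' StdSet 4 8 nw nr w R) j) := by
    intro j i h
    apply not_black_of_fixed i
    rintro _ ⟨v, hv, rfl⟩ _ ⟨v', hv', rfl⟩
    rw [hTa, hTa]
    exact stdSet_fixed hv hv' _ h
  have rot_not_white : ∀ j i, nw + nr ≤ (src j i).val / 4 →
      ¬ IsWhite (box 4 8 (T '' StdSet 4 8 nw nr w R) j) := by
    intro j i h
    apply not_white_of_free i
    intro c
    obtain ⟨v, hv, e, -⟩ := hfree fun _ => c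
    exact ⟨T v, ⟨v, hv, rfl⟩, by rw [hTa, e _ h]⟩
  have rot_white : ∀ j, (∀ i, (src j i).val / 4 < nw) →
      IsWhite (box 4 8 (T '' StdSet 4 8 nw nr w R) j) := by
    intro j h
    apply white_of_fixed (hne.image T)
    rintro _ ⟨v, hv, rfl⟩ _ ⟨v', hv', rfl⟩ i
    rw [hTa, hTa]
    exact stdSet_fixed hv hv' _ (h i)
  have rot_black : ∀ j, (∀ i, nw + nr ≤ (src j i).val / 4) →
      IsBlack (box 4 8 (T '' StdSet 4 8 nw nr w R) j) := by
    intro j h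
    apply black_of_free
    intro u
    obtain ⟨v, hv, e, -⟩ := hfree (Function.extend (src j) u 0)
    exact ⟨T v, ⟨v, hv, rfl⟩, fun i => by rw [hTa, e _ (h i), (src_injective j).extend_apply]⟩
  have std_white : ∀ j : Fin 8, j.val < nw → IsWhite (box 4 8 (StdSet 4 8 nw nr w R) j) := by
    intro j h
    apply white_of_fixed hne
    intro v hv v' hv' i
    exact stdSet_fixed hv hv' _ (by simp only [brickIdx]; omega)
  have std_black : ∀ j : Fin 8, nw + nr ≤ j.val →
      IsBlack (box 4 8 (StdSet 4 8 nw nr w R) j) := by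
    intro j h
    apply black_of_free
    intro u
    obtain ⟨v, hv, e, -⟩ := hfree (Function.extend (brickIdx 4 8 j) u 0)
    refine ⟨v, hv, fun i => ?_⟩
    rw [e _ (by simp only [brickIdx]; omega), (brickIdx_injective j).extend_apply]
  have std_ruled : nr = 1 → ∀ j : Fin 8, j.val = nw →
      IsRuled (box 4 8 (StdSet 4 8 nw nr w R) j) := by
    intro h1 j hj
    have hb : box 4 8 (StdSet 4 8 nw nr w R) j = R := by
      ext x
      constructor
      · rintro ⟨v, hv, rfl⟩
        exact hv.2 h1 j hj
      · intro hx
        obtain ⟨v, hv, -, e⟩ := stdSet_free (nw := nw) (w := w) x (fun _ => hx) hnr 0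
        exact ⟨v, hv, e h1 j hj⟩
    rw [hb]
    have hc := hR h1
    constructor
    · rintro ⟨a, rfl⟩
      rw [Set.ncard_singleton] at hc
      omega
    · intro hu
      rw [hu, Set.ncard_univ, Nat.card_eq_fintype_card] at hc
      simp [ZMod.card] at hc
  obtain h0 | h1 : nr = 0 ∨ nr = 1 := by omega
  · -- the rotated box at `j` straddles the last white and the first black brick
    let j : Fin 8 := ⟨(nw + 2) % 8, by omega⟩
    have hB := rot_not_black j 0 (by simp only [src, j, Fin.val_zero]; omega)
    have hW := rot_not_white j 3 (by simp only [src, j]; omega)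
    rcases lt_or_ge j.val nw with h | h
    · exact hW ((hs j).1.1 (std_white j h))
    · exact hB ((hs j).2.1 (std_black j (by omega)))
  · by_cases h2 : nw = 2
    · -- the rotated brick `4` is read from bricks `1` (white) and `2` (ruled)
      exact rot_not_black 4 0 (by simp [src]; omega)
        ((hs 4).2.1 (std_black 4 (by simp; omega)))
    · let j : Fin 8 := ⟨nw, by omega⟩
      obtain ⟨hW, hB⟩ := std_ruled h1 j rfl
      rcases lt_or_ge nw 2 with h | h
      · refine hB ((hs j).2.2 (rot_black j fun i => ?_))
        simp only [src, j]
        omega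
      · refine hW ((hs j).1.2 (rot_white j fun i => ?_))
        simp only [src, j]
        omega
end

section
/- Let m = 4, δ = 16, n = 64, and let P ∈ GL₆₄(𝔽₂) be the permutation matrix of the PRESENT bit permutation, i.e. P_{i,j} = 1 if and only if j = π(i), where π(i) = (16(i−1) mod 63) + 1 for 1 ≤ i ≤ 63 and π(64) = 64. Then P is non-type-preserving: there exists a subset D ⊆ 𝔽₂⁶⁴ in standard form of non-trivial type such that the type of DP differs from the type of D. -/
/-! The witness is `D = {0} × 𝔽₂⁴`, of type `(15, 0, 1)`: its last box is black. Coordinate 60 of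
`vP` is coordinate 51 of `v`, since `16 * 51 ≡ 60 (mod 63)`, and coordinate 51 lies in a white
brick of `D`. So every vector of `DP` vanishes at coordinate 60, the first one of the last brick,
and the last box of `DP` is not black. -/

open Matrix

/-- The permutation matrix of the PRESENT bit permutation (0-indexed):
`π(i) = 16·i mod 63` for `i < 63` and `π(63) = 63`; entry `(i, j)` is `1` iff
`j = π(i)`. -/
def presentMatrix : Matrix (Fin (4 * 16)) (Fin (4 * 16)) (ZMod 2) :=
  Matrix.of fun i j =>
    if (j : ℕ) = (if (i : ℕ) = 63 then 63 else (16 * (i : ℕ)) % 63) then 1 else 0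

/-- **PRESENT.** With `m = 4`, `δ = 16`, `n = 64`, the PRESENT bit
permutation matrix is non-type-preserving: some subset `D ⊆ 𝔽₂⁶⁴` in standard form of
non-trivial type has `type(DP) ≠ type(D)`. -/
theorem stmt_13 :
    ∃ (D : Set (Fin (4 * 16) → ZMod 2)) (nw nr nb : ℕ),
      StdForm 4 16 D nw nr nb ∧ nw ≠ 16 ∧ nb ≠ 16 ∧
      ¬ SameType 4 16 D ((fun v => Matrix.vecMul v presentMatrix) '' D) := by
  refine ⟨StdSet 4 16 15 0 0 ∅, 15, 0, 1, ⟨by norm_num, by norm_num, 0, ∅, by simp, rfl⟩,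
    by norm_num, by norm_num, fun h => ?_⟩
  have hD : IsBlack (box 4 16 (StdSet 4 16 15 0 0 ∅) 15) := by
    refine Set.eq_univ_of_forall fun u => ?_
    -- The preimage of `u` carries `u` in the last brick and zeros elsewhere.
    refine ⟨fun k => if h : 60 ≤ (k : ℕ) then u ⟨k - 60, by omega⟩ else 0,
      ⟨fun j hj => ?_, by simp⟩, ?_⟩
    · funext i
      have hi : ¬ 60 ≤ 4 * (j : ℕ) + (i : ℕ) := by omega
      simp [brickProj, brickIdx, hi]
    · funext i
      simp [brickProj, brickIdx]
  -- The image would then contain a vector whose coordinate 60 is `1`.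
  have hE := (h 15).2.1 hD
  obtain ⟨_, ⟨v, ⟨hv, _⟩, rfl⟩, hu⟩ : (fun _ => 1 : Fin 4 → ZMod 2) ∈ box 4 16 _ 15 :=
    hE ▸ Set.mem_univ _
  have h1 : Matrix.vecMul v presentMatrix 60 = 1 := congrFun hu 0
  have h0 : Matrix.vecMul v presentMatrix 60 = 0 := by
    rw [Matrix.vecMul, dotProduct]
    refine Finset.sum_eq_zero fun i _ => ?_
    rcases lt_or_ge (i : ℕ) 60 with hi | hi
    · have hvi : v i = 0 := by
        have := congrFun (hv ⟨(i : ℕ) / 4, by omega⟩ (by simp only; omega)) ⟨(i : ℕ) % 4, by omega⟩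
        have hidx : brickIdx 4 16 ⟨(i : ℕ) / 4, by omega⟩ ⟨(i : ℕ) % 4, by omega⟩ = i :=
          Fin.ext (Nat.div_add_mod _ _)
        simpa [brickProj, hidx] using this
      rw [hvi, zero_mul]
    -- The indices 60, 61, 62, 63 are sent to 15, 31, 47, 63, never to 60.
    · have hP : ∀ i : Fin (4 * 16), 60 ≤ (i : ℕ) → presentMatrix i 60 = 0 := by decide
      rw [hP i hi, mul_zero]
  exact zero_ne_one (h0.symm.trans h1)
end

section
/- Let m > 1, δ ≥ 3, q = 2^m, and let M be a δ × δ MDS matrix over the field 𝔽_q, i.e. every square submatrix of M is invertible. Then M, regarded as a mixing layer on V = (𝔽_q)^δ acting on row vectors on the right, is non-type-preserving: there exists a subset D ⊆ (𝔽_q)^δ in standard form of non-trivial type such that the type of DM differs from the type of D. -/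
/-!
All entries of an MDS matrix are nonzero, since its `1 × 1` submatrices are invertible. Take
`D = {0} × F^(δ-1)`, of type `(1, 0, δ-1)`, whose first box is white. Both `0` and the second
standard basis vector `e` lie in `D`, and `0 M = 0` while the first coordinate of `e M` is
`M 1 0 ≠ 0`, so the first box of `D M` is not white.
-/

/-- The `j`-th box of `D ⊆ F^δ`: the projection of `D` on the `j`-th coordinate. -/
def boxQ {F : Type*} (δ : ℕ) (D : Set (Fin δ → F)) (j : Fin δ) : Set F :=
  (fun v => v j) '' D

/-- The set `{v_w} × R × F^{n_b}` in standard form: the first `nw` coordinates are fixed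
(equal to `w`), coordinate number `nw` (0-indexed) lies in `R` when `nr = 1`, and the
remaining coordinates are free. -/
def StdSetQ {F : Type*} (δ nw nr : ℕ) (w : Fin δ → F) (R : Set F) : Set (Fin δ → F) :=
  { v | (∀ j : Fin δ, (j : ℕ) < nw → v j = w j) ∧
        (nr = 1 → ∀ j : Fin δ, (j : ℕ) = nw → v j ∈ R) }

/-- `D` is in standard form of type `(nw, nr, nb)`. -/
def StdFormQ {F : Type*} [Fintype F] (δ : ℕ) (D : Set (Fin δ → F)) (nw nr nb : ℕ) : Prop :=
  nw + nr + nb = δ ∧ nr ≤ 1 ∧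
  ∃ (w : Fin δ → F) (R : Set F),
    (nr = 1 → 2 ≤ R.ncard ∧ R.ncard ≤ Fintype.card F - 1) ∧ D = StdSetQ δ nw nr w R

/-- `D` and `E` have the same type: corresponding boxes have the same kind. -/
def SameTypeQ {F : Type*} (δ : ℕ) (D E : Set (Fin δ → F)) : Prop :=
  ∀ j : Fin δ,
    (IsWhite (boxQ δ D j) ↔ IsWhite (boxQ δ E j)) ∧
    (IsBlack (boxQ δ D j) ↔ IsBlack (boxQ δ E j))

/-- **MDS matrices.** Let `q = 2^m` with `m > 1`, `δ ≥ 3`, and let `M` be a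
`δ × δ` MDS matrix over `𝔽_q` (every square submatrix is invertible).  Then `M` is
non-type-preserving: some subset `D ⊆ (𝔽_q)^δ` in standard form of non-trivial type has
`type(DM) ≠ type(D)`. -/
theorem stmt_14 (m : ℕ) (hm : 1 < m) (δ : ℕ) (hδ : 3 ≤ δ)
    (F : Type) [Field F] [Fintype F] (hF : Fintype.card F = 2 ^ m)
    (M : Matrix (Fin δ) (Fin δ) F)
    (hMDS : ∀ (k : ℕ) (r c : Fin k → Fin δ), Function.Injective r → Function.Injective c →
      IsUnit (M.submatrix r c)) :
    ∃ (D : Set (Fin δ → F)) (nw nr nb : ℕ),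
      StdFormQ δ D nw nr nb ∧ nw ≠ δ ∧ nb ≠ δ ∧
      ¬ SameTypeQ δ D ((fun v => Matrix.vecMul v M) '' D) := by
  have h0 : 0 < δ := by omega
  have h1 : 1 < δ := by omega
  let i0 : Fin δ := ⟨0, h0⟩
  let i1 : Fin δ := ⟨1, h1⟩
  have hM : M i1 i0 ≠ 0 := by
    have h := hMDS 1 (fun _ => i1) (fun _ => i0)
      (Function.injective_of_subsingleton _) (Function.injective_of_subsingleton _)
    rw [Matrix.isUnit_iff_isUnit_det] at h
    simpa using h
  refine ⟨StdSetQ δ 1 0 0 ∅, 1, 0, δ - 1,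
    ⟨by omega, by omega, 0, ∅, by simp, rfl⟩, by omega, by omega, fun hs => ?_⟩
  have hz : (0 : Fin δ → F) ∈ StdSetQ δ 1 0 0 (∅ : Set F) := by simp [StdSetQ]
  have he : (Pi.single i1 1 : Fin δ → F) ∈ StdSetQ δ 1 0 0 (∅ : Set F) := by
    refine ⟨fun j hj => ?_, by simp⟩
    have hne : j ≠ i1 := by
      rintro rfl
      simp [i1] at hj
    simp [hne]
  have hw : IsWhite (boxQ δ (StdSetQ δ 1 0 0 (∅ : Set F)) i0) := by
    refine ⟨0, Set.eq_singleton_iff_unique_mem.2 ⟨⟨0, hz, rfl⟩, ?_⟩⟩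
    rintro _ ⟨v, hv, rfl⟩
    exact hv.1 i0 Nat.zero_lt_one
  obtain ⟨a, ha⟩ := (hs i0).1.1 hw
  have ha0 : (0 : F) = a := by
    have h : (0 : F) ∈ ({a} : Set F) := by
      rw [← ha]
      exact ⟨_, ⟨0, hz, rfl⟩, by simp⟩
    exact h
  have ha1 : M i1 i0 = a := by
    have h : M i1 i0 ∈ ({a} : Set F) := by
      rw [← ha]
      exact ⟨_, ⟨_, he, rfl⟩, by simp⟩
    exact h
  exact hM (ha1.trans ha0.symm)
end

section
/- Let t be a positive even integer, δ = 2^t, c = 2^{t/2}, m > 1, q = 2^m, and let M ∈ GL_c(𝔽_q) be an MDS matrix (every square submatrix of M is invertible). Let Λ ∈ GL_δ(𝔽_q) be the δ × δ matrix over 𝔽_q given in c × c block form (each block of size c × c) whose (i,j)-block equals 𝕀_{((i−j) mod c)+1} · Mᵀ, where 𝕀_ℓ denotes the c × c matrix with the entry 1 in position (ℓ,ℓ) and 0 elsewhere (this is the AES-like mixing layer ShiftRowsᵀ · MixColumnsᵀ). Then Λ is non-type-preserving: there exists a subset D ⊆ (𝔽_q)^δ in standard form of non-trivial type such that the type of DΛ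 differs from the type of D. -/
/-- **AES-like mixing layer.** Let `t` be a positive even integer,
`δ = 2^t`, `c = 2^{t/2}`, `q = 2^m` with `m > 1`, and let `M ∈ GL_c(𝔽_q)` be MDS.  Let
`Λ` be the `δ × δ` matrix over `𝔽_q` whose `(i,j)`-block (in `c × c` block form) is
`𝕀_{((i-j) mod c)+1} · Mᵀ`; entrywise (0-indexed), `Λ_{r,s} = M_{s mod c, ℓ}` if
`r mod c = ℓ`, and `0` otherwise, where `ℓ = (r/c - s/c) mod c`.  Then `Λ` is
non-type-preserving: some subset `D ⊆ (𝔽_q)^δ` in standard form of non-trivial type has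
`type(DΛ) ≠ type(D)`. -/
theorem stmt_15 (m : ℕ) (hm : 1 < m) (F : Type) [Field F] [Fintype F]
    (hF : Fintype.card F = 2 ^ m)
    (t : ℕ) (ht : 0 < t) (heven : Even t)
    (c δ : ℕ) (hc : c = 2 ^ (t / 2)) (hδ : δ = 2 ^ t)
    (hcpos : 0 < c)
    (M : Matrix (Fin c) (Fin c) F)
    (hMDS : ∀ (k : ℕ) (r cc : Fin k → Fin c), Function.Injective r → Function.Injective cc →
      IsUnit (M.submatrix r cc))
    (Λ : Matrix (Fin δ) (Fin δ) F)
    (hΛ : ∀ r s : Fin δ,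
      Λ r s =
        if (r : ℕ) % c = ((r : ℕ) / c + c - (s : ℕ) / c) % c then
          M ⟨(s : ℕ) % c, Nat.mod_lt _ hcpos⟩
            ⟨((r : ℕ) / c + c - (s : ℕ) / c) % c, Nat.mod_lt _ hcpos⟩
        else 0) :
    ∃ (D : Set (Fin δ → F)) (nw nr nb : ℕ),
      StdFormQ δ D nw nr nb ∧ nw ≠ δ ∧ nb ≠ δ ∧
      ¬ SameTypeQ δ D ((fun v => Matrix.vecMul v Λ) '' D) := by
  have hcc : δ = c * c := by
    obtain ⟨k, hk⟩ := heven
    rw [hδ, hc, ← pow_add]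
    congr 1
    omega
  have hc2 : 2 ≤ c := by
    rw [hc]
    calc 2 = 2 ^ 1 := rfl
      _ ≤ 2 ^ (t / 2) := Nat.pow_le_pow_right (by norm_num) (by obtain ⟨k, hk⟩ := heven; omega)
  have hδ4 : 4 ≤ δ := by rw [hcc]; nlinarith
  have hlast : δ - 1 = c * (c - 1) + (c - 1) := by
    obtain ⟨d, rfl⟩ : ∃ d, c = d + 1 := ⟨c - 1, by omega⟩
    rw [hcc, Nat.add_sub_cancel, Nat.sub_eq_iff_eq_add (by nlinarith)]
    ring
  have hdiv : (δ - 1) / c = c - 1 := by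
    rw [hlast, Nat.mul_add_div hcpos, Nat.div_eq_of_lt (by omega), add_zero]
  have hmod : (δ - 1) % c = c - 1 := by
    rw [hlast, Nat.mul_add_mod, Nat.mod_eq_of_lt (by omega)]
  have hM : ∀ a b : Fin c, M a b ≠ 0 := by
    intro a b
    have h := hMDS 1 (fun _ => a) (fun _ => b)
      (Function.injective_of_subsingleton _) (Function.injective_of_subsingleton _)
    rw [Matrix.isUnit_iff_isUnit_det, Matrix.det_fin_one] at h
    exact h.ne_zero
  have hentry : Λ ⟨δ - 1, by omega⟩ ⟨0, by omega⟩ ≠ 0 := by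
    have hcond : (δ - 1) % c = ((δ - 1) / c + c - 0 / c) % c := by
      rw [hdiv, hmod, Nat.zero_div, Nat.sub_zero, Nat.add_mod_right, Nat.mod_eq_of_lt (by omega)]
    rw [hΛ, if_pos hcond]
    exact hM _ _
  refine ⟨StdSetQ δ (δ - 1) 0 0 ∅, δ - 1, 0, 1,
    ⟨by omega, by omega, 0, ∅, by simp, rfl⟩, by omega, by omega, fun h => ?_⟩
  have hzero : (0 : Fin δ → F) ∈ StdSetQ δ (δ - 1) 0 (0 : Fin δ → F) ∅ := by
    simp [StdSetQ]
  have hsingle : (Pi.single ⟨δ - 1, by omega⟩ 1 : Fin δ → F) ∈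
      StdSetQ δ (δ - 1) 0 (0 : Fin δ → F) ∅ := by
    refine ⟨fun j hj => ?_, by simp⟩
    rw [Pi.single_eq_of_ne (fun hjl => by simp [hjl] at hj)]
    rfl
  have hwhite : IsWhite (boxQ δ (StdSetQ δ (δ - 1) 0 (0 : Fin δ → F) ∅) ⟨0, by omega⟩) := by
    refine ⟨0, Set.eq_singleton_iff_unique_mem.2 ⟨⟨0, hzero, rfl⟩, ?_⟩⟩
    rintro _ ⟨v, hv, rfl⟩
    exact hv.1 ⟨0, by omega⟩ (by simp; omega)
  obtain ⟨a, ha⟩ := (h ⟨0, by omega⟩).1.1 hwhite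
  have h0 := ha.subset ⟨_, ⟨_, hzero, rfl⟩, rfl⟩
  have h1 := ha.subset ⟨_, ⟨_, hsingle, rfl⟩, rfl⟩
  simp only [Matrix.zero_vecMul, Pi.zero_apply, Set.mem_singleton_iff] at h0
  simp only [Matrix.single_one_vecMul, Set.mem_singleton_iff] at h1
  exact hentry (h1.trans h0.symm)
end

section
/- Let m = 4, δ = 4, n = 16, and let Λ ∈ GL₁₆(𝔽₂) be the GPig2 mixing layer: the permutation matrix whose row number 4(i−1)+j is the standard basis row vector 𝐞_{4(j−1)+i}, for all 1 ≤ i, j ≤ 4 (the bit permutation transposing the 4×4 array of bits). Then Λ is non-type-preserving: there exists a subset D ⊆ 𝔽₂¹⁶ in standard form of non-trivial type such that the type of DΛ differs from the type of D. -/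
/-!
Take `D = {0} × (𝔽₂⁴)³`, of type `(1, 0, 3)`, whose first box is white. The first brick of `vΛ`
collects the first bit of every brick of `v`, and three of these are free on `D`: the vectors
`0` and `𝐞₅` of `D` (index `4` when counting from `0`) have images that differ in the first brick,
so the first box of `DΛ` is not white.
-/

open Matrix

/-- The GPig2 mixing layer: the permutation matrix of the bit permutation transposing the
`4 × 4` array of bits; 0-indexed, row `r` has its `1` in column `4·(r mod 4) + r/4`. -/
def gpig2Matrix : Matrix (Fin (4 * 4)) (Fin (4 * 4)) (ZMod 2) :=
  Matrix.of fun r c => if (c : ℕ) = 4 * ((r : ℕ) % 4) + (r : ℕ) / 4 then 1 else 0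

/-- **GPig2.** With `m = 4`, `δ = 4`, `n = 16`, the GPig2 mixing layer is
non-type-preserving: some subset `D ⊆ 𝔽₂¹⁶` in standard form of non-trivial type has
`type(DΛ) ≠ type(D)`. -/
theorem stmt_16 :
    ∃ (D : Set (Fin (4 * 4) → ZMod 2)) (nw nr nb : ℕ),
      StdForm 4 4 D nw nr nb ∧ nw ≠ 4 ∧ nb ≠ 4 ∧
      ¬ SameType 4 4 D ((fun v => Matrix.vecMul v gpig2Matrix) '' D) := by
  refine ⟨StdSet 4 4 1 0 (fun _ => 0) ∅, 1, 0, 3,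
    ⟨rfl, by norm_num, fun _ => 0, ∅, by norm_num, rfl⟩, by norm_num, by norm_num, ?_⟩
  intro h
  have hD : IsWhite (box 4 4 (StdSet 4 4 1 0 (fun _ => 0) ∅) 0) := by
    refine ⟨0, Set.eq_singleton_iff_unique_mem.2 ⟨⟨0, ⟨fun _ _ => rfl, by simp⟩, rfl⟩, ?_⟩⟩
    rintro _ ⟨v, hv, rfl⟩
    exact hv.1 0 (by norm_num)
  obtain ⟨a, ha⟩ := (h 0).1.1 hD
  have h0 : brickProj 4 4 (Matrix.vecMul 0 gpig2Matrix) 0 = a :=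
    ha.subset ⟨_, ⟨0, ⟨fun _ _ => rfl, by simp⟩, rfl⟩, rfl⟩
  -- Bit 4 (the first bit of the second brick) is free in `D`, and `Λ` moves it to bit 1.
  have h1 : brickProj 4 4 (Matrix.vecMul (Pi.single 4 1) gpig2Matrix) 0 = a := by
    refine ha.subset ⟨_, ⟨Pi.single 4 1, ⟨fun j hj => ?_, by simp⟩, rfl⟩, rfl⟩
    obtain rfl : j = 0 := Fin.ext (by simpa using hj)
    funext i
    fin_cases i <;> rfl
  have h2 := congrFun (h0.trans h1.symm) 1
  rw [Matrix.zero_vecMul, Matrix.single_one_vecMul] at h2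
  have h3 : (0 : ZMod 2) = 1 := h2
  exact zero_ne_one h3
end
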